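/- Quasi-semicontinuity of BV functions: Let u ∈ BV_loc(X) and let ε > 0. Then there exists an open set G ⊂ X with capa_1(G) < ε such that the restriction of the lower approximate limit u^∧ to X∖G is real-valued and lower semicontinuous, and the restriction of the upper approximate limit u^∨ to X∖G is real-valued and upper semicontinuous. -/

import Mathlib

open MeasureTheory Filter Metric Set
open scoped Topology ENNReal NNReal symmDiff

noncomputable section

namespace PaperBV

/-- A rectifiable curve parametrized by arc-length: a `1`-Lipschitz map on `[0, len]`. -/
structure Curve (X : Type*) [MetricSpace X] where
  len : ℝ
  len_nonneg : 0 ≤ len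
  toFun : ℝ → X
  lip : LipschitzOnWith 1 toFun (Set.Icc 0 len)

variable {X : Type*} [MetricSpace X] [MeasurableSpace X] [BorelSpace X]

/-- The curve lies in the set `A`. -/
def Curve.In (γ : Curve X) (A : Set X) : Prop :=
  ∀ t ∈ Set.Icc (0 : ℝ) γ.len, γ.toFun t ∈ A

/-- The curve integral `∫_γ g ds` of a nonnegative function, for an
arc-length parametrized curve. -/
def Curve.integral (γ : Curve X) (g : X → ℝ≥0∞) : ℝ≥0∞ :=
  ∫⁻ t in Set.Icc (0 : ℝ) γ.len, g (γ.toFun t)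

/-- The upper gradient inequality `|u(x) - u(y)| ≤ ∫_γ g ds` along the curve `γ`,
where `x, y` are the endpoints of `γ`. -/
def UGIneq (u : X → ℝ) (g : X → ℝ≥0∞) (γ : Curve X) : Prop :=
  ENNReal.ofReal |u (γ.toFun 0) - u (γ.toFun γ.len)| ≤ γ.integral g

/-- `g` is an upper gradient of `u` on `X`: `g` is nonnegative (automatic in `ℝ≥0∞`),
Borel, and the upper gradient inequality holds along every curve. -/
def IsUpperGradient (u : X → ℝ) (g : X → ℝ≥0∞) : Prop :=
  Measurable g ∧ ∀ γ : Curve X, UGIneq u g γ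

/-- A family of curves has zero `1`-modulus: there is a nonnegative Borel function
`ρ ∈ L¹(X)` whose curve integral is infinite along every curve of the family. -/
def ZeroMod (μ : Measure X) (Γ : Set (Curve X)) : Prop :=
  ∃ ρ : X → ℝ≥0∞, Measurable ρ ∧ (∫⁻ x, ρ x ∂μ) < ∞ ∧ ∀ γ ∈ Γ, γ.integral ρ = ∞

/-- `g` is a `1`-weak upper gradient of `u` in `A`: `g` is nonnegative, `μ`-measurable,
and the upper gradient inequality holds along `1`-a.e. curve in `A`. -/
def IsWeakUpperGradientOn (μ : Measure X) (u : X → ℝ) (g : X → ℝ≥0∞) (A : Set X) : Prop :=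
  AEMeasurable g μ ∧ ZeroMod μ {γ : Curve X | γ.In A ∧ ¬ UGIneq u g γ}

/-- A nonnegative function `g` belongs to `L¹_loc(A)`. -/
def LIntegrableLocOn (μ : Measure X) (g : X → ℝ≥0∞) (A : Set X) : Prop :=
  ∀ x ∈ A, ∃ r > (0 : ℝ), (∫⁻ y in A ∩ Metric.ball x r, g y ∂μ) < ∞

/-- `g` is the minimal `1`-weak upper gradient of `u` in `A`: a `1`-weak upper gradient
satisfying `g ≤ g'` `μ`-a.e. in `A` for every `1`-weak upper gradient `g' ∈ L¹_loc(A)`. -/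
def IsMinimalWUG (μ : Measure X) (u : X → ℝ) (g : X → ℝ≥0∞) (A : Set X) : Prop :=
  IsWeakUpperGradientOn μ u g A ∧
    ∀ g' : X → ℝ≥0∞, IsWeakUpperGradientOn μ u g' A → LIntegrableLocOn μ g' A →
      ∀ᵐ x ∂(μ.restrict A), g x ≤ g' x

/-- The Newtonian norm `‖u‖_{N^{1,1}(A)}` (valued in `ℝ≥0∞`). -/
def NNorm (μ : Measure X) (A : Set X) (u : X → ℝ) : ℝ≥0∞ :=
  (∫⁻ x in A, ENNReal.ofReal |u x| ∂μ) +
    ⨅ (g : X → ℝ≥0∞) (_ : IsWeakUpperGradientOn μ u g A), ∫⁻ x in A, g x ∂μ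

/-- `u ∈ N^{1,1}(A)`. -/
def MemN11 (μ : Measure X) (A : Set X) (u : X → ℝ) : Prop :=
  NNorm μ A u < ∞

/-- `u ∈ N^{1,1}_loc(A)`: every point of `A` has a ball `B` with `u ∈ N^{1,1}(A ∩ B)`. -/
def MemN11Loc (μ : Measure X) (A : Set X) (u : X → ℝ) : Prop :=
  ∀ x ∈ A, ∃ r > (0 : ℝ), NNorm μ (A ∩ Metric.ball x r) u < ∞

/-- `u ∈ N^{1,1}(Ω')` for every bounded open `Ω' ⊆ X`. -/
def MemN11LocBounded (μ : Measure X) (u : X → ℝ) : Prop :=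
  ∀ Ω' : Set X, IsOpen Ω' → Bornology.IsBounded Ω' → NNorm μ Ω' u < ∞

/-- `u ∈ N^{1,1}_0(Ω)`: `u ∈ N^{1,1}(X)` and `u = 0` outside `Ω`. -/
def MemN110 (μ : Measure X) (Ω : Set X) (u : X → ℝ) : Prop :=
  MemN11 μ Set.univ u ∧ ∀ x ∉ Ω, u x = 0

/-- The `1`-capacity `capa₁(A) = inf {‖u‖_{N^{1,1}(X)} : u ∈ N^{1,1}(X), u ≥ 1 on A}`. -/
def capa1 (μ : Measure X) (A : Set X) : ℝ≥0∞ :=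
  ⨅ (u : X → ℝ) (_ : MemN11 μ Set.univ u) (_ : ∀ x ∈ A, 1 ≤ u x), NNorm μ Set.univ u

/-- `U` is `1`-quasiopen: for every `ε > 0` there is an open `G` with `capa₁(G) < ε`
such that `U ∪ G` is open. -/
def QuasiOpen (μ : Measure X) (U : Set X) : Prop :=
  ∀ ε : ℝ, 0 < ε → ∃ G : Set X, IsOpen G ∧ capa1 μ G < ENNReal.ofReal ε ∧ IsOpen (U ∪ G)

/-- `u ∈ L¹_loc(A)`. -/
def MemL1Loc (μ : Measure X) (A : Set X) (u : X → ℝ) : Prop :=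
  AEMeasurable u (μ.restrict A) ∧
    ∀ x ∈ A, ∃ r > (0 : ℝ), (∫⁻ y in A ∩ Metric.ball x r, ENNReal.ofReal |u y| ∂μ) < ∞

/-- `v i → u` in `L¹_loc(A)`: every `x ∈ A` has a ball `B` with `v i → u` in `L¹(A ∩ B)`. -/
def L1LocConv (μ : Measure X) (A : Set X) (v : ℕ → X → ℝ) (u : X → ℝ) : Prop :=
  ∀ x ∈ A, ∃ r > (0 : ℝ),
    Filter.Tendsto (fun i => ∫⁻ y in A ∩ Metric.ball x r, ENNReal.ofReal |v i y - u y| ∂μ)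
      Filter.atTop (𝓝 0)

/-- `u` is locally Lipschitz on `Ω`. -/
def LocLipOn (u : X → ℝ) (Ω : Set X) : Prop :=
  ∀ x ∈ Ω, ∃ r > (0 : ℝ), ∃ K : ℝ≥0, LipschitzOnWith K u (Ω ∩ Metric.ball x r)

/-- The total variation `‖Du‖(Ω)` of `u` in an open set `Ω`: the infimum of
`liminf_i ∫_Ω g_{v i} dμ` over sequences of locally Lipschitz functions `v i → u`
in `L¹_loc(Ω)`, where `g_{v i}` is the minimal `1`-weak upper gradient of `v i` in `Ω`. -/
def tvOpen (μ : Measure X) (Ω : Set X) (u : X → ℝ) : ℝ≥0∞ :=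
  ⨅ (v : ℕ → X → ℝ) (g : ℕ → X → ℝ≥0∞) (_ : ∀ i, LocLipOn (v i) Ω)
    (_ : ∀ i, IsMinimalWUG μ (v i) (g i) Ω) (_ : L1LocConv μ Ω v u),
    Filter.liminf (fun i => ∫⁻ x in Ω, g i x ∂μ) Filter.atTop

/-- The total variation `‖Du‖(A)` of `u` in an arbitrary set `A`:
`inf {‖Du‖(Ω) : Ω ⊇ A open}`. -/
def tv (μ : Measure X) (A : Set X) (u : X → ℝ) : ℝ≥0∞ :=
  ⨅ (Ω : Set X) (_ : IsOpen Ω) (_ : A ⊆ Ω), tvOpen μ Ω u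

/-- The perimeter `P(E, A) = ‖Dχ_E‖(A)` for arbitrary `A`. -/
def perim (μ : Measure X) (E A : Set X) : ℝ≥0∞ :=
  tv μ A (Set.indicator E (fun _ => (1 : ℝ)))

/-- The perimeter `P(E, Ω) = ‖Dχ_E‖(Ω)` for open `Ω`. -/
def perimOpen (μ : Measure X) (E Ω : Set X) : ℝ≥0∞ :=
  tvOpen μ Ω (Set.indicator E (fun _ => (1 : ℝ)))

/-- The measure `μ` is doubling with constant `Cd`. -/
def Doubling (μ : Measure X) (Cd : ℝ) : Prop :=
  1 ≤ Cd ∧ ∀ (x : X) (r : ℝ), 0 < r →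
    0 < μ (Metric.ball x (2 * r)) ∧
      μ (Metric.ball x (2 * r)) ≤ ENNReal.ofReal Cd * μ (Metric.ball x r) ∧
      μ (Metric.ball x r) < ∞

/-- The space supports a `(1,1)`-Poincaré inequality with constants `CP, lam`. -/
def Poincare (μ : Measure X) (CP lam : ℝ) : Prop :=
  1 ≤ CP ∧ 1 ≤ lam ∧ ∀ (x : X) (r : ℝ), 0 < r → ∀ (u : X → ℝ) (g : X → ℝ≥0∞),
    MemL1Loc μ Set.univ u → IsUpperGradient u g →
      ENNReal.ofReal (⨍ y in Metric.ball x r, |u y - ⨍ z in Metric.ball x r, u z ∂μ| ∂μ)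
        ≤ ENNReal.ofReal (CP * r) *
            ((∫⁻ y in Metric.ball x (lam * r), g y ∂μ) / μ (Metric.ball x (lam * r)))

/-- The restricted spherical Hausdorff content of codimension one. -/
def HR (μ : Measure X) (R : ℝ) (A : Set X) : ℝ≥0∞ :=
  ⨅ (c : ℕ → X) (r : ℕ → ℝ) (_ : ∀ i, 0 < r i ∧ r i ≤ R)
    (_ : A ⊆ ⋃ i, Metric.ball (c i) (r i)),
    ∑' i, μ (Metric.ball (c i) (r i)) / ENNReal.ofReal (r i)

/-- The codimension-one Hausdorff measure `H(A) = lim_{R → 0} H_R(A)`. -/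
def Hcodim (μ : Measure X) (A : Set X) : ℝ≥0∞ :=
  ⨆ (R : ℝ) (_ : 0 < R), HR μ R A

/-- The lower approximate limit `u^∧`. -/
def lowerApprox (μ : Measure X) (u : X → ℝ) (x : X) : EReal :=
  sSup ((fun t : ℝ => (t : EReal)) ''
    {t : ℝ | Filter.Tendsto
      (fun r => μ (Metric.ball x r ∩ {y | u y < t}) / μ (Metric.ball x r))
      (𝓝[>] (0 : ℝ)) (𝓝 0)})

/-- The upper approximate limit `u^∨`. -/
def upperApprox (μ : Measure X) (u : X → ℝ) (x : X) : EReal :=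
  sInf ((fun t : ℝ => (t : EReal)) ''
    {t : ℝ | Filter.Tendsto
      (fun r => μ (Metric.ball x r ∩ {y | t < u y}) / μ (Metric.ball x r))
      (𝓝[>] (0 : ℝ)) (𝓝 0)})

/-- `u ∈ BV_loc(X)`: `u ∈ L¹_loc(X)` with `‖Du‖(Ω') < ∞` for every bounded open `Ω'`. -/
def MemBVLoc (μ : Measure X) (u : X → ℝ) : Prop :=
  MemL1Loc μ Set.univ u ∧
    ∀ Ω' : Set X, IsOpen Ω' → Bornology.IsBounded Ω' → tvOpen μ Ω' u < ∞

/-- The measure-theoretic interior `I_E`. -/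
def mInterior (μ : Measure X) (E : Set X) : Set X :=
  {x | Filter.Tendsto (fun r => μ (Metric.ball x r \ E) / μ (Metric.ball x r))
    (𝓝[>] (0 : ℝ)) (𝓝 0)}

/-- The measure-theoretic exterior `O_E`. -/
def mExterior (μ : Measure X) (E : Set X) : Set X :=
  {x | Filter.Tendsto (fun r => μ (Metric.ball x r ∩ E) / μ (Metric.ball x r))
    (𝓝[>] (0 : ℝ)) (𝓝 0)}

/-- The measure-theoretic boundary `∂*E`: the points where both `E` and its complement
have positive upper density. -/
def mBoundary (μ : Measure X) (E : Set X) : Set X :=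
  {x | 0 < Filter.limsup (fun r => μ (Metric.ball x r ∩ E) / μ (Metric.ball x r))
        (𝓝[>] (0 : ℝ)) ∧
       0 < Filter.limsup (fun r => μ (Metric.ball x r \ E) / μ (Metric.ball x r))
        (𝓝[>] (0 : ℝ))}

/-!
A set `E` of finite perimeter has a measure-theoretic exterior that is open up to a set of small
capacity. Indeed the perimeter of `E` is carried by a measure which, by the relative isoperimetric
inequality, does not charge the points of low density of `E`; a boxing argument then covers by an
open set of small capacity the low-density points outside the exterior. The same argument
bounds by the perimeter the capacity of the non-exterior points at which `E` has small density at
unit scale.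

By the coarea inequality, for almost every `t` the set `{u < t}` has finite perimeter in a given
ball, and its perimeter is arbitrarily small for some `t` arbitrarily close to `-∞`. Quasi-openness
of the exteriors for a countable dense set of levels makes `u^∧` quasi-lower semicontinuous, the
second estimate makes `u^∧ > -∞` quasi-everywhere, and `-u` takes care of `u^∨`.
-/

/-! ### Curves and upper gradients -/

section Curves

omit [MeasurableSpace X] [BorelSpace X]

variable {γ : Curve X} {A B Ω : Set X} {u u' : X → ℝ} {g g' : X → ℝ≥0∞}

lemma Curve.continuousOn (γ : Curve X) : ContinuousOn γ.toFun (Icc 0 γ.len) :=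
  γ.lip.continuousOn

lemma Curve.dist_endpoints_le (γ : Curve X) : dist (γ.toFun 0) (γ.toFun γ.len) ≤ γ.len := by
  simpa [Real.dist_eq, abs_of_nonneg γ.len_nonneg] using
    γ.lip.dist_le_mul 0 (left_mem_Icc.2 γ.len_nonneg) γ.len (right_mem_Icc.2 γ.len_nonneg)

lemma Curve.In.mono (hγ : γ.In A) (hAB : A ⊆ B) : γ.In B :=
  fun t ht => hAB (hγ t ht)

lemma Curve.In.left_mem (hγ : γ.In A) : γ.toFun 0 ∈ A :=
  hγ 0 (left_mem_Icc.2 γ.len_nonneg)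

lemma Curve.In.right_mem (hγ : γ.In A) : γ.toFun γ.len ∈ A :=
  hγ γ.len (right_mem_Icc.2 γ.len_nonneg)

lemma Curve.In.integral_mono (hγ : γ.In A) (hg : ∀ x ∈ A, g x ≤ g' x) :
    γ.integral g ≤ γ.integral g' :=
  setLIntegral_mono' measurableSet_Icc fun t ht => hg _ (hγ t ht)

/-- The restriction of a curve to the parameter interval `[s, t]`, translated to start at `0`. -/
def Curve.sub (γ : Curve X) (s t : ℝ) (hs : 0 ≤ s) (hst : s ≤ t) (ht : t ≤ γ.len) : Curve X where
  len := t - s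
  len_nonneg := sub_nonneg.2 hst
  toFun := fun x => γ.toFun (s + x)
  lip := by
    intro x hx y hy
    simpa using γ.lip (x := s + x) ⟨by linarith [hx.1], by linarith [hx.2]⟩ (y := s + y)
      ⟨by linarith [hy.1], by linarith [hy.2]⟩

lemma Curve.integral_sub {s t : ℝ} (hs : 0 ≤ s) (hst : s ≤ t) (ht : t ≤ γ.len)
    (g : X → ℝ≥0∞) :
    (γ.sub s t hs hst ht).integral g = ∫⁻ x in Icc s t, g (γ.toFun x) := by
  rw [← (measurePreserving_add_left volume s).setLIntegral_comp_preimage_emb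
    (MeasurableEquiv.addLeft s).measurableEmbedding (fun x => g (γ.toFun x)) (Icc s t)]
  simp [Curve.integral, Curve.sub]

lemma Curve.sub_in {s t : ℝ} (hs : 0 ≤ s) (hst : s ≤ t) (ht : t ≤ γ.len)
    (h : ∀ x ∈ Icc s t, γ.toFun x ∈ A) : (γ.sub s t hs hst ht).In A :=
  fun x hx => h (s + x) ⟨le_add_of_nonneg_right hx.1, le_sub_iff_add_le'.1 hx.2⟩

lemma ugIneq_sub_iff {s t : ℝ} (hs : 0 ≤ s) (hst : s ≤ t) (ht : t ≤ γ.len) :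
    UGIneq u g (γ.sub s t hs hst ht) ↔
      ENNReal.ofReal |u (γ.toFun s) - u (γ.toFun t)| ≤ ∫⁻ x in Icc s t, g (γ.toFun x) := by
  rw [UGIneq, Curve.integral_sub]
  simp [Curve.sub]

lemma UGIneq.congr_mono (h : UGIneq u g γ) (hγ : γ.In A) (hu : EqOn u u' A)
    (hg : ∀ x ∈ A, g x ≤ g' x) : UGIneq u' g' γ := by
  rw [UGIneq, ← hu hγ.left_mem, ← hu hγ.right_mem]
  exact h.trans (hγ.integral_mono hg)

lemma ugIneq_of_eqOn_const {c : ℝ} (hγ : γ.In A) (hu : ∀ x ∈ A, u x = c) : UGIneq u g γ := by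
  simp [UGIneq, hu _ hγ.left_mem, hu _ hγ.right_mem]

lemma ugIneq_of_lipschitzWith {L : ℝ≥0} (hu : LipschitzWith L u) (hγ : γ.In A)
    (hg : ∀ x ∈ A, L ≤ g x) : UGIneq u g γ :=
  calc ENNReal.ofReal |u (γ.toFun 0) - u (γ.toFun γ.len)|
      ≤ ENNReal.ofReal (L * γ.len) := ENNReal.ofReal_le_ofReal <|
        (hu.dist_le_mul _ _).trans (by gcongr; exact γ.dist_endpoints_le)
    _ = γ.integral fun _ => L := by
        simp [Curve.integral, ENNReal.ofReal_mul]
    _ ≤ γ.integral g := hγ.integral_mono hg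

/-- The upper gradient inequality for `u` and `g` along every curve in `Ω`. -/
def UGIneqOn (Ω : Set X) (u : X → ℝ) (g : X → ℝ≥0∞) : Prop :=
  ∀ γ : Curve X, γ.In Ω → UGIneq u g γ

lemma UGIneqOn.ofReal_abs_sub_le (h : UGIneqOn Ω u g) (hγ : γ.In Ω) {s t : ℝ} (hs : 0 ≤ s)
    (hst : s ≤ t) (ht : t ≤ γ.len) :
    ENNReal.ofReal |u (γ.toFun s) - u (γ.toFun t)| ≤ ∫⁻ x in Icc s t, g (γ.toFun x) :=
  (ugIneq_sub_iff hs hst ht).1 <| h _ <| Curve.sub_in hs hst ht fun x hx =>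
    hγ x ⟨hs.trans hx.1, hx.2.trans ht⟩

lemma ofReal_abs_sub_le_add (a b c : ℝ) :
    ENNReal.ofReal |a - c| ≤ ENNReal.ofReal |a - b| + ENNReal.ofReal |b - c| := by
  rw [← ENNReal.ofReal_add (abs_nonneg _) (abs_nonneg _)]
  exact ENNReal.ofReal_le_ofReal (abs_sub_le a b c)

lemma setLIntegral_Icc_add_Icc (f : ℝ → ℝ≥0∞) {a b c : ℝ} (hab : a ≤ b) (hbc : b ≤ c) :
    (∫⁻ x in Icc a b, f x) + (∫⁻ x in Icc b c, f x) = ∫⁻ x in Icc a c, f x := by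
  rw [← setLIntegral_congr (Ioc_ae_eq_Icc (a := b) (b := c)),
    ← lintegral_union measurableSet_Ioc, Icc_union_Ioc_eq_Icc hab hbc]
  exact disjoint_left.2 fun x hx hx' => hx.2.not_gt hx'.1

lemma ofReal_abs_sub_le_setLIntegral_of_monotone {φ : ℝ → ℝ} {f : ℝ → ℝ≥0∞} {t : ℕ → ℝ}
    (ht : Monotone t) (h : ∀ n, ENNReal.ofReal |φ (t n) - φ (t (n + 1))| ≤
      ∫⁻ x in Icc (t n) (t (n + 1)), f x) (n : ℕ) :
    ENNReal.ofReal |φ (t 0) - φ (t n)| ≤ ∫⁻ x in Icc (t 0) (t n), f x := by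
  induction n with
  | zero => simp
  | succ n ih =>
    rw [← setLIntegral_Icc_add_Icc _ (ht n.zero_le) (ht n.le_succ)]
    exact (ofReal_abs_sub_le_add _ _ _).trans (add_le_add ih (h n))

lemma ugIneqOn_of_locally (hloc : ∀ x ∈ Ω, ∃ U : Set X, IsOpen U ∧ x ∈ U ∧ ∃ δ > (0 : ℝ),
    ∀ γ : Curve X, γ.In (U ∩ Ω) → γ.len ≤ δ → UGIneq u g γ) : UGIneqOn Ω u g := by
  intro γ hγ
  choose! U hUo hxU δ hδ hU using hloc
  let nbhd : Icc (0 : ℝ) γ.len → Set (Icc (0 : ℝ) γ.len) := fun t =>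
    (fun s => γ.toFun s) ⁻¹' U (γ.toFun t) ∩ ball t (δ (γ.toFun t) / 2)
  have hcont : Continuous fun s : Icc (0 : ℝ) γ.len => γ.toFun s := γ.continuousOn.domRestrict
  obtain ⟨t, t_zero, t_mono, ⟨m, hm⟩, ht⟩ := exists_monotone_Icc_subset_open_cover_Icc
    γ.len_nonneg (c := nbhd)
    (fun i => ((hUo _ (hγ i i.2)).preimage hcont).inter isOpen_ball)
    (fun s _ => mem_iUnion.2 ⟨s, hxU _ (hγ s s.2), mem_ball_self (half_pos (hδ _ (hγ s s.2)))⟩)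
  have hstep (n : ℕ) : ENNReal.ofReal |u (γ.toFun (t n)) - u (γ.toFun (t (n + 1)))| ≤
      ∫⁻ x in Icc (t n : ℝ) (t (n + 1)), g (γ.toFun x) := by
    obtain ⟨i, hi⟩ := ht n
    have hle : t n ≤ t (n + 1) := t_mono n.le_succ
    refine (ugIneq_sub_iff (t n).2.1 hle (t (n + 1)).2.2).1
      (hU _ (hγ i i.2) _ (Curve.sub_in _ _ _ fun x hx => ?_) ?_)
    · have hx' : x ∈ Icc 0 γ.len := ⟨(t n).2.1.trans hx.1, hx.2.trans (t (n + 1)).2.2⟩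
      exact ⟨(hi (show (⟨x, hx'⟩ : Icc 0 γ.len) ∈ Icc (t n) (t (n + 1)) from hx)).1, hγ x hx'⟩
    · have hdist : dist (t (n + 1)) (t n) < δ (γ.toFun i) / 2 + δ (γ.toFun i) / 2 :=
        (dist_triangle_right _ _ i).trans_lt
          (add_lt_add (hi (right_mem_Icc.2 hle)).2 (hi (left_mem_Icc.2 hle)).2)
      rw [add_halves, Subtype.dist_eq, Real.dist_eq] at hdist
      exact (le_abs_self _).trans hdist.le
  have htelescope := ofReal_abs_sub_le_setLIntegral_of_monotone
    (φ := fun s => u (γ.toFun s)) (t := fun n => (t n : ℝ)) t_mono hstep m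
  simpa only [t_zero, hm m le_rfl] using! htelescope

end Curves

lemma Curve.aemeasurable (γ : Curve X) :
    AEMeasurable γ.toFun (volume.restrict (Icc 0 γ.len)) :=
  γ.continuousOn.aemeasurable measurableSet_Icc

section ProductRule

variable {Ω : Set X} {v ψ : X → ℝ} {g : X → ℝ≥0∞} {γ : Curve X}

omit [MeasurableSpace X] [BorelSpace X] in
lemma UGIneqOn.ofReal_mul_len_le (hu : UGIneqOn Ω v g) (hv : ∀ x, 0 ≤ v x) (hγ : γ.In Ω) :
    ENNReal.ofReal (v (γ.toFun 0)) * ENNReal.ofReal γ.len ≤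
      γ.integral (fun x => ENNReal.ofReal (v x)) + γ.integral g * ENNReal.ofReal γ.len := by
  have hpointwise : ∀ t ∈ Icc 0 γ.len,
      ENNReal.ofReal (v (γ.toFun 0)) ≤ ENNReal.ofReal (v (γ.toFun t)) + γ.integral g := by
    intro t ht
    calc ENNReal.ofReal (v (γ.toFun 0))
        ≤ ENNReal.ofReal (v (γ.toFun t) + |v (γ.toFun 0) - v (γ.toFun t)|) :=
          ENNReal.ofReal_le_ofReal (by linarith [le_abs_self (v (γ.toFun 0) - v (γ.toFun t))])
      _ = ENNReal.ofReal (v (γ.toFun t)) + ENNReal.ofReal |v (γ.toFun 0) - v (γ.toFun t)| :=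
          ENNReal.ofReal_add (hv _) (abs_nonneg _)
      _ ≤ ENNReal.ofReal (v (γ.toFun t)) + γ.integral g := by
          gcongr
          exact (hu.ofReal_abs_sub_le hγ le_rfl ht.1 ht.2).trans
            (lintegral_mono_set (Icc_subset_Icc_right ht.2))
  calc ENNReal.ofReal (v (γ.toFun 0)) * ENNReal.ofReal γ.len
      = ∫⁻ _ in Icc 0 γ.len, ENNReal.ofReal (v (γ.toFun 0)) := by simp
    _ ≤ ∫⁻ t in Icc 0 γ.len, (ENNReal.ofReal (v (γ.toFun t)) + γ.integral g) :=
        setLIntegral_mono' measurableSet_Icc hpointwise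
    _ = _ := by
        rw [lintegral_add_right _ measurable_const]
        simp [Curve.integral]

lemma abs_mul_sub_mul_le {a b c d : ℝ} (ha : 0 ≤ a) (hd : d ∈ Icc (0 : ℝ) 1) :
    |a * c - b * d| ≤ |a - b| + a * |c - d| :=
  calc |a * c - b * d| = |d * (a - b) + a * (c - d)| := by ring_nf
    _ ≤ |d * (a - b)| + |a * (c - d)| := abs_add_le _ _
    _ ≤ |a - b| + a * |c - d| := by
        rw [abs_mul, abs_mul, abs_of_nonneg ha, abs_of_nonneg hd.1]
        gcongr
        exact mul_le_of_le_one_left (abs_nonneg _) hd.2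

/-- The Leibniz term of `g` is `ψ g ≤ g`; the second copy of `g` pays for comparing the value of
`v` at the starting point with its average along the curve. -/
lemma UGIneqOn.mul_of_len_le (hu : UGIneqOn Ω v g) (hg : Measurable g) (hv : ∀ x, 0 ≤ v x)
    (hψ : ∀ x, ψ x ∈ Icc (0 : ℝ) 1) {L : ℝ≥0} (hlip : LipschitzWith L ψ) (hγ : γ.In Ω)
    (hlen : L * γ.len ≤ 1) :
    UGIneq (fun x => v x * ψ x) (fun x => 2 * g x + L * ENNReal.ofReal (v x)) γ := by
  set a := γ.toFun 0
  set b := γ.toFun γ.len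
  set I := γ.integral g
  set V := γ.integral fun x => ENNReal.ofReal (v x)
  have hintegral : γ.integral (fun x => 2 * g x + L * ENNReal.ofReal (v x)) = 2 * I + L * V := by
    have hgγ : AEMeasurable (fun t => g (γ.toFun t)) (volume.restrict (Icc 0 γ.len)) :=
      hg.comp_aemeasurable γ.aemeasurable
    simp only [I, V, Curve.integral]
    rw [lintegral_add_left' (hgγ.const_mul 2), lintegral_const_mul' _ _ (by simp),
      lintegral_const_mul' _ _ (by simp)]
  have hψab : |ψ a - ψ b| ≤ L * γ.len :=
    (hlip.dist_le_mul a b).trans (by gcongr; exact γ.dist_endpoints_le)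
  have hva := hv a
  have hlen' : (L : ℝ≥0∞) * ENNReal.ofReal γ.len ≤ 1 := by
    rw [← ENNReal.ofReal_coe_nnreal, ← ENNReal.ofReal_mul L.coe_nonneg]
    exact ENNReal.ofReal_le_one.2 hlen
  rw [UGIneq, hintegral]
  calc ENNReal.ofReal |v a * ψ a - v b * ψ b|
      ≤ ENNReal.ofReal (|v a - v b| + L * (v a * γ.len)) := ENNReal.ofReal_le_ofReal <|
        (abs_mul_sub_mul_le hva (hψ b)).trans (by linarith [mul_le_mul_of_nonneg_left hψab hva])
    _ = ENNReal.ofReal |v a - v b| + L * (ENNReal.ofReal (v a) * ENNReal.ofReal γ.len) := by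
        have := mul_nonneg L.coe_nonneg (mul_nonneg hva γ.len_nonneg)
        rw [ENNReal.ofReal_add (abs_nonneg _) this, ENNReal.ofReal_mul L.coe_nonneg,
          ENNReal.ofReal_mul hva, ENNReal.ofReal_coe_nnreal]
    _ ≤ I + L * (V + I * ENNReal.ofReal γ.len) := by
        gcongr
        exacts [hu γ hγ, hu.ofReal_mul_len_le hv hγ]
    _ = I + I * (L * ENNReal.ofReal γ.len) + L * V := by ring
    _ ≤ I + I * 1 + L * V := by gcongr
    _ = 2 * I + L * V := by ring

end ProductRule

/-! ### Doubling measures -/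

section Doubling

variable {μ : Measure X} {D : ℝ≥0}

section

omit [BorelSpace X]

lemma Doubling.one_le (h : Doubling μ D) : 1 ≤ D := h.1

lemma Doubling.measure_ball_pos (h : Doubling μ D) (x : X) {r : ℝ} (hr : 0 < r) :
    0 < μ (ball x r) := by
  simpa [mul_div_cancel₀] using (h.2 x (r / 2) (half_pos hr)).1

lemma Doubling.measure_ball_lt_top (h : Doubling μ D) (x : X) (r : ℝ) : μ (ball x r) < ∞ := by
  rcases le_or_gt r 0 with hr | hr
  · simp [ball_eq_empty.2 hr]
  · exact (h.2 x r hr).2.2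

lemma Doubling.measure_ball_two_pow_mul_le (h : Doubling μ D) (k : ℕ) (x : X) {r : ℝ}
    (hr : 0 < r) : μ (ball x (2 ^ k * r)) ≤ D ^ k * μ (ball x r) := by
  induction k with
  | zero => simp
  | succ k ih =>
    calc μ (ball x (2 ^ (k + 1) * r)) = μ (ball x (2 * (2 ^ k * r))) := by ring_nf
      _ ≤ D * μ (ball x (2 ^ k * r)) := by
          simpa only [ENNReal.ofReal_coe_nnreal] using (h.2 x _ (by positivity)).2.1
      _ ≤ D * (D ^ k * μ (ball x r)) := by gcongr
      _ = D ^ (k + 1) * μ (ball x r) := by ring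

lemma Doubling.measure_ball_le (h : Doubling μ D) {k : ℕ} {x y : X} {R r : ℝ} (hr : 0 < r)
    (hk : dist x y + R ≤ 2 ^ k * r) : μ (ball x R) ≤ D ^ k * μ (ball y r) :=
  (measure_mono (ball_subset_ball' (by linarith))).trans (h.measure_ball_two_pow_mul_le k y hr)

end

lemma Doubling.card_le_of_isSeparated (h : Doubling μ D) {k : ℕ} {y : X} {R : ℝ} {ρ : ℝ≥0}
    (hρ : 0 < ρ) {S : Finset X} (hS : ↑S ⊆ closedBall y R) (hsep : IsSeparated ρ (S : Set X))
    (hk : 2 * R + ρ ≤ 2 ^ k * (ρ / 2)) : (S.card : ℝ≥0∞) ≤ D ^ k := by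
  rcases S.eq_empty_or_nonempty with rfl | ⟨c₀, hc₀⟩
  · simp
  have hρ' : (0 : ℝ) < ρ := hρ
  have hR : 0 ≤ R := dist_nonneg.trans (hS hc₀)
  have hdisj : (S : Set X).PairwiseDisjoint fun c => ball c (ρ / 2 : ℝ) := by
    intro c hc d hd hcd
    have hsep_cd : (ρ : ℝ≥0∞) < edist c d := hsep hc hd hcd
    rw [edist_nndist, ENNReal.coe_lt_coe] at hsep_cd
    exact ball_disjoint_ball ((add_halves (ρ : ℝ)).trans_le (NNReal.coe_le_coe.2 hsep_cd.le))
  have hsum : ∑ c ∈ S, μ (ball c (ρ / 2)) ≤ μ (ball y (R + ρ)) := by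
    rw [← measure_biUnion_finset hdisj fun _ _ => measurableSet_ball]
    refine measure_mono (iUnion₂_subset fun c hc => ball_subset_ball' ?_)
    linarith [mem_closedBall.1 (hS hc)]
  have hball : ∀ c ∈ S, μ (ball y (R + ρ)) ≤ D ^ k * μ (ball c (ρ / 2)) := fun c hc =>
    h.measure_ball_le (half_pos hρ') (by linarith [mem_closedBall'.1 (hS hc)])
  have hcard : S.card * μ (ball y (R + ρ)) ≤ D ^ k * μ (ball y (R + ρ)) :=
    calc S.card * μ (ball y (R + ρ)) = ∑ _ ∈ S, μ (ball y (R + ρ)) := by simp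
      _ ≤ ∑ c ∈ S, D ^ k * μ (ball c (ρ / 2)) := Finset.sum_le_sum hball
      _ = D ^ k * ∑ c ∈ S, μ (ball c (ρ / 2)) := by rw [Finset.mul_sum]
      _ ≤ D ^ k * μ (ball y (R + ρ)) := by gcongr
  exact (ENNReal.mul_le_mul_iff_left (h.measure_ball_pos _ (by linarith)).ne'
    (h.measure_ball_lt_top _ _).ne).1 hcard

lemma Doubling.packingNumber_ne_top (h : Doubling μ D) {A : Set X} (hA : Bornology.IsBounded A)
    {ρ : ℝ≥0} (hρ : 0 < ρ) : packingNumber ρ A ≠ ⊤ := by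
  rcases A.eq_empty_or_nonempty with rfl | ⟨y, -⟩
  · simp
  obtain ⟨R, hR⟩ := hA.subset_closedBall y
  obtain ⟨k, hk⟩ := pow_unbounded_of_one_lt ((2 * R + ρ) / (ρ / 2)) one_lt_two
  obtain ⟨N, hN⟩ := exists_nat_gt (D ^ k)
  have hcard (S : Finset X) (hSA : ↑S ⊆ A) (hsep : IsSeparated ρ (S : Set X)) : S.card < N := by
    have := h.card_le_of_isSeparated hρ (hSA.trans hR) hsep
      ((div_le_iff₀ (half_pos (NNReal.coe_pos.2 hρ))).1 hk.le)
    exact_mod_cast (show (S.card : ℝ≥0) ≤ D ^ k by exact_mod_cast this).trans_lt hN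
  refine ne_top_of_le_ne_top (ENat.natCast_ne_top N) (iSup₂_le fun C hCA => iSup_le fun hsep => ?_)
  by_contra! hNC
  obtain ⟨S, hSC, hS⟩ := exists_subset_encard_eq hNC.le
  lift S to Finset X using finite_of_encard_eq_coe hS
  rw [encard_coe_eq_coe_finsetCard, Nat.cast_inj] at hS
  exact (hcard S (hSC.trans hCA) (hsep.subset hSC)).ne hS

lemma Doubling.exists_finset_isSeparated_isCover (h : Doubling μ D) {A : Set X}
    (hA : Bornology.IsBounded A) {ρ : ℝ≥0} (hρ : 0 < ρ) :
    ∃ S : Finset X, ↑S ⊆ A ∧ IsSeparated ρ (S : Set X) ∧ IsCover ρ A S := by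
  have hpack := h.packingNumber_ne_top hA hρ
  have hfin : (maximalSeparatedSet ρ A).Finite :=
    encard_ne_top_iff.1 (by rwa [encard_maximalSeparatedSet hpack])
  refine ⟨hfin.toFinset, ?_, ?_, ?_⟩ <;> rw [hfin.coe_toFinset]
  exacts [maximalSeparatedSet_subset, isSeparated_maximalSeparatedSet,
    isCover_maximalSeparatedSet hpack]

lemma Doubling.properSpace [CompleteSpace X] (h : Doubling μ D) : ProperSpace X := by
  refine ⟨fun x r => TotallyBounded.isCompact_of_isClosed ?_ isClosed_closedBall⟩
  refine Metric.totallyBounded_iff.2 fun ε hε => ?_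
  obtain ⟨S, -, -, hcover⟩ := h.exists_finset_isSeparated_isCover
    (isBounded_closedBall (x := x) (r := r)) (ρ := (ε / 2).toNNReal) (by simpa using hε)
  refine ⟨S, S.finite_toSet, (isCover_iff_subset_iUnion_closedBall.1 hcover).trans ?_⟩
  refine iUnion₂_mono fun c _ => closedBall_subset_ball ?_
  rw [Real.coe_toNNReal _ (half_pos hε).le]
  exact half_lt_self hε

end Doubling

/-! ### Admissible pairs and capacity -/

/-- A measurable function `v` with values in `[0, 1]`, together with a Borel function `g` which is
an upper gradient of `v` along all curves in `Ω`. -/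
structure IsAdmissiblePair (Ω : Set X) (v : X → ℝ) (g : X → ℝ≥0∞) : Prop where
  measurable : Measurable v
  mem_Icc : ∀ x, v x ∈ Icc (0 : ℝ) 1
  measurable_grad : Measurable g
  ugIneqOn : UGIneqOn Ω v g

section Supremum

variable {ι : Type*}

lemma abs_iSup_sub_iSup_le {a b : ι → ℝ} {c : ℝ} (ha : BddAbove (range a))
    (hb : BddAbove (range b)) (hc : 0 ≤ c) (hab : ∀ i, |a i - b i| ≤ c) :
    |(⨆ i, a i) - ⨆ i, b i| ≤ c := by
  cases isEmpty_or_nonempty ι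
  · simpa using hc
  have hle {a b : ι → ℝ} (hb : BddAbove (range b)) (hab : ∀ i, |a i - b i| ≤ c) :
      ⨆ i, a i ≤ (⨆ i, b i) + c :=
    ciSup_le fun i => by linarith [le_abs_self (a i - b i), hab i, le_ciSup hb i]
  rw [abs_sub_le_iff, sub_le_iff_le_add', sub_le_iff_le_add']
  exact ⟨hle hb hab, hle ha fun i => abs_sub_comm (a i) (b i) ▸ hab i⟩

lemma ofReal_iSup_le_tsum (a : ι → ℝ) :
    ENNReal.ofReal (⨆ i, a i) ≤ ∑' i, ENNReal.ofReal (a i) := by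
  rcases eq_or_ne (∑' i, ENNReal.ofReal (a i)) ∞ with hsum | hsum
  · exact hsum ▸ le_top
  rw [ENNReal.ofReal_le_iff_le_toReal hsum]
  refine Real.iSup_le (fun i => ?_) ENNReal.toReal_nonneg
  rw [← ENNReal.ofReal_le_iff_le_toReal hsum]
  exact ENNReal.le_tsum (f := fun i => ENNReal.ofReal (a i)) i

lemma IsAdmissiblePair.iSup [Countable ι] {Ω : Set X} {v : ι → X → ℝ} {g : ι → X → ℝ≥0∞}
    (h : ∀ i, IsAdmissiblePair Ω (v i) (g i)) :
    IsAdmissiblePair Ω (fun x => ⨆ i, v i x) (fun x => ∑' i, g i x) where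
  measurable := Measurable.iSup fun i => (h i).measurable
  mem_Icc x := ⟨Real.iSup_nonneg fun i => ((h i).mem_Icc x).1,
    Real.iSup_le (fun i => ((h i).mem_Icc x).2) zero_le_one⟩
  measurable_grad := Measurable.tsum fun i => (h i).measurable_grad
  ugIneqOn γ hγ := by
    have hbdd (x : X) : BddAbove (range fun i => v i x) :=
      ⟨1, forall_mem_range.2 fun i => ((h i).mem_Icc x).2⟩
    rw [UGIneq, Curve.integral, lintegral_tsum (f := fun i t => g i (γ.toFun t))
      fun i => (h i).measurable_grad.comp_aemeasurable γ.aemeasurable]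
    rcases eq_or_ne (∑' i, ∫⁻ t in Icc 0 γ.len, g i (γ.toFun t)) ∞ with hsum | hsum
    · exact hsum ▸ le_top
    rw [ENNReal.ofReal_le_iff_le_toReal hsum]
    refine abs_iSup_sub_iSup_le (hbdd _) (hbdd _) ENNReal.toReal_nonneg fun i => ?_
    rw [← ENNReal.ofReal_le_iff_le_toReal hsum]
    exact ((h i).ugIneqOn γ hγ).trans
      (ENNReal.le_tsum (f := fun i => ∫⁻ t in Icc 0 γ.len, g i (γ.toFun t)) i)

end Supremum

/-- The capacity of `G` is at most `a`, as witnessed by a single admissible pair on `X`. Unlike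
`capa1 μ G ≤ a` this involves no infimum and no exceptional curves. -/
def CapaLE (μ : Measure X) (G : Set X) (a : ℝ≥0∞) : Prop :=
  ∃ (f : X → ℝ) (g : X → ℝ≥0∞), IsAdmissiblePair univ f g ∧ (∀ x ∈ G, f x = 1) ∧
    (∫⁻ x, ENNReal.ofReal (f x) ∂μ) + ∫⁻ x, g x ∂μ ≤ a

section Capacity

variable {μ : Measure X} {G H : Set X} {a b : ℝ≥0∞}

omit [BorelSpace X] in
lemma CapaLE.mono (h : CapaLE μ G a) (hab : a ≤ b) : CapaLE μ G b :=
  let ⟨f, g, hfg, hf, hle⟩ := h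
  ⟨f, g, hfg, hf, hle.trans hab⟩

omit [BorelSpace X] in
lemma CapaLE.capa1_le (h : CapaLE μ G a) (ha : a < ∞) : capa1 μ G ≤ a := by
  obtain ⟨f, g, hfg, hf, hle⟩ := h
  have hweak : IsWeakUpperGradientOn μ f g univ :=
    ⟨hfg.measurable_grad.aemeasurable, fun _ => 0, measurable_const, by simp,
      fun γ hγ => absurd (hfg.ugIneqOn γ hγ.1) hγ.2⟩
  have hnorm : NNorm μ univ f ≤ a := by
    refine le_trans ?_ hle
    simp only [NNorm, Measure.restrict_univ]
    gcongr with x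
    · exact (abs_of_nonneg (hfg.mem_Icc x).1).le
    · exact iInf₂_le g hweak
  exact iInf_le_of_le f (iInf₂_le_of_le (hnorm.trans_lt ha) (fun x hx => (hf x hx).ge) hnorm)

lemma CapaLE.iUnion {ι : Type*} [Countable ι] {G : ι → Set X} {a : ι → ℝ≥0∞}
    (h : ∀ i, CapaLE μ (G i) (a i)) : CapaLE μ (⋃ i, G i) (∑' i, a i) := by
  choose f g hfg hf hle using h
  have hsup := IsAdmissiblePair.iSup hfg
  refine ⟨_, _, hsup, fun x hx => ?_, ?_⟩
  · obtain ⟨i, hi⟩ := mem_iUnion.1 hx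
    refine (hsup.mem_Icc x).2.antisymm ((hf i x hi).ge.trans ?_)
    exact le_ciSup ⟨1, forall_mem_range.2 fun i => ((hfg i).mem_Icc x).2⟩ i
  · calc (∫⁻ x, ENNReal.ofReal (⨆ i, f i x) ∂μ) + ∫⁻ x, ∑' i, g i x ∂μ
        ≤ (∫⁻ x, ∑' i, ENNReal.ofReal (f i x) ∂μ) + ∫⁻ x, ∑' i, g i x ∂μ := by
          gcongr with x
          exact ofReal_iSup_le_tsum _
      _ = ∑' i, ((∫⁻ x, ENNReal.ofReal (f i x) ∂μ) + ∫⁻ x, g i x ∂μ) := by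
          rw [lintegral_tsum fun i => (hfg i).measurable.ennreal_ofReal.aemeasurable,
            lintegral_tsum fun i => (hfg i).measurable_grad.aemeasurable, ENNReal.tsum_add]
      _ ≤ ∑' i, a i := ENNReal.tsum_le_tsum hle

lemma CapaLE.union (hG : CapaLE μ G a) (hH : CapaLE μ H b) : CapaLE μ (G ∪ H) (a + b) := by
  have h := CapaLE.iUnion (μ := μ) (G := fun i : Bool => cond i G H) (a := fun i => cond i a b)
    (Bool.forall_bool.2 ⟨hH, hG⟩)
  rw [← union_eq_iUnion] at h
  simpa [tsum_fintype] using h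

end Capacity

/-- The projection of `ℝ` onto `[0, 1]`, as a real-valued function. -/
def clamp (s : ℝ) : ℝ := projIcc (0 : ℝ) 1 zero_le_one s

section Clamp

lemma clamp_mem_Icc (s : ℝ) : clamp s ∈ Icc (0 : ℝ) 1 := (projIcc (0 : ℝ) 1 zero_le_one s).2

lemma clamp_of_nonpos {s : ℝ} (hs : s ≤ 0) : clamp s = 0 := by
  rw [clamp, projIcc_of_le_left _ hs]

lemma clamp_of_one_le {s : ℝ} (hs : 1 ≤ s) : clamp s = 1 := by
  rw [clamp, projIcc_of_right_le _ hs]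

lemma lipschitzWith_clamp : LipschitzWith 1 clamp := by
  simpa using! LipschitzWith.subtype_val _ |>.comp (LipschitzWith.projIcc zero_le_one)

omit [MeasurableSpace X] [BorelSpace X] in
lemma lipschitzWith_clamp_mul {f : X → ℝ} (hf : LipschitzWith 1 f) (L : ℝ≥0) :
    LipschitzWith L fun x => clamp (L * f x) := by
  have hmul : LipschitzWith L fun x => L * f x := by
    simpa using! (lipschitzWith_smul (L : ℝ)).comp hf
  simpa using! lipschitzWith_clamp.comp hmul

end Clamp

section BallCapacity

variable {μ : Measure X} {D : ℝ≥0}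

omit [MeasurableSpace X] [BorelSpace X] in
lemma ugIneqOn_indicator_of_lipschitzWith {u : X → ℝ} {L : ℝ≥0} {K V : Set X}
    (hu : LipschitzWith L u) (hK : IsClosed K) (hV : IsOpen V) (hKV : K ⊆ V)
    (hu₀ : ∀ x ∉ K, u x = 0) : UGIneqOn univ u (V.indicator fun _ => (L : ℝ≥0∞)) := by
  refine ugIneqOn_of_locally fun x _ => ?_
  by_cases hx : x ∈ K
  · exact ⟨V, hV, hKV hx, 1, one_pos, fun γ hγ _ => ugIneq_of_lipschitzWith hu
      (hγ.mono inter_subset_left) fun y hy => by rw [indicator_of_mem hy]⟩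
  · exact ⟨Kᶜ, hK.isOpen_compl, hx, 1, one_pos, fun γ hγ _ =>
      ugIneq_of_eqOn_const (hγ.mono inter_subset_left) hu₀⟩

lemma capaLE_ball (μ : Measure X) (x : X) {r : ℝ} (hr : 0 < r) :
    CapaLE μ (ball x r) ((1 + ENNReal.ofReal (2 / r)) * μ (ball x (2 * r))) := by
  set L : ℝ≥0 := (2 / r).toNNReal
  have hL : (L : ℝ) = 2 / r := Real.coe_toNNReal _ (by positivity)
  set f : X → ℝ := fun y => clamp (L * (3 * r / 2 - dist y x))
  have hlip : LipschitzWith L f := lipschitzWith_clamp_mul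
    (LipschitzWith.of_dist_le_mul fun y z => by
      rw [Real.dist_eq, sub_sub_sub_cancel_left, abs_sub_comm]
      simpa using abs_dist_sub_le y z x) L
  have hf₀ : ∀ y ∉ closedBall x (3 * r / 2), f y = 0 := fun y hy =>
    clamp_of_nonpos (mul_nonpos_of_nonneg_of_nonpos L.coe_nonneg
      (by linarith [not_le.1 (mt mem_closedBall.2 hy)]))
  have hsub : closedBall x (3 * r / 2) ⊆ ball x (2 * r) :=
    closedBall_subset_ball (by linarith)
  refine ⟨f, (ball x (2 * r)).indicator fun _ => (L : ℝ≥0∞),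
    ⟨hlip.continuous.measurable, fun y => clamp_mem_Icc _,
      measurable_const.indicator measurableSet_ball,
      ugIneqOn_indicator_of_lipschitzWith hlip isClosed_closedBall isOpen_ball hsub hf₀⟩,
    fun y hy => clamp_of_one_le ?_, ?_⟩
  · calc (1 : ℝ) = 2 / r * (r / 2) := by field_simp
      _ ≤ L * (3 * r / 2 - dist y x) := by rw [hL]; gcongr; linarith [mem_ball.1 hy]
  · have hf_le : ∀ y, ENNReal.ofReal (f y) ≤ (ball x (2 * r)).indicator 1 y := by
      intro y
      by_cases hy : y ∈ ball x (2 * r)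
      · simpa [hy] using (clamp_mem_Icc _).2
      · simp [hy, hf₀ y fun h => hy (hsub h)]
    rw [lintegral_indicator_const measurableSet_ball, add_mul, one_mul,
      ← lintegral_indicator_one measurableSet_ball]
    gcongr
    exacts [hf_le _, le_rfl]

lemma Doubling.capaLE_ball_of_le (h : Doubling μ D) {a r : ℝ} {k : ℕ} {m : ℝ≥0∞} {y : X}
    (ha : 1 ≤ a) (hk : 10 * a ≤ 2 ^ k) (hr : 0 < r) (hr1 : r ≤ 1)
    (hm : μ (ball y r) ≤ ENNReal.ofReal r * m) :
    CapaLE μ (ball y (5 * (a * r))) (2 * D ^ k * m) := by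
  refine (capaLE_ball μ y (by positivity)).mono ?_
  have hcoef : 1 + ENNReal.ofReal (2 / (5 * (a * r))) ≤ 2 * ENNReal.ofReal r⁻¹ := by
    rw [two_mul]
    refine add_le_add ?_ (ENNReal.ofReal_le_ofReal ?_)
    · exact ENNReal.one_le_ofReal.2 ((one_le_inv₀ hr).2 hr1)
    · rw [inv_eq_one_div, div_le_div_iff₀ (by positivity) hr]
      nlinarith
  have hball : μ (ball y (2 * (5 * (a * r)))) ≤ D ^ k * μ (ball y r) :=
    h.measure_ball_le hr (by rw [dist_self]; nlinarith)
  calc (1 + ENNReal.ofReal (2 / (5 * (a * r)))) * μ (ball y (2 * (5 * (a * r))))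
      ≤ 2 * ENNReal.ofReal r⁻¹ * (D ^ k * (ENNReal.ofReal r * m)) := by
        gcongr
        exact hball.trans (by gcongr)
    _ = (ENNReal.ofReal r⁻¹ * ENNReal.ofReal r) * (2 * D ^ k * m) := by ring
    _ = 2 * D ^ k * m := by
        rw [← ENNReal.ofReal_mul (by positivity), inv_mul_cancel₀ hr.ne']
        simp

omit [MeasurableSpace X] [BorelSpace X] in
lemma exists_countable_disjoint_closedBall_covering [SecondCountableTopology X] {Y : Set X}
    {s : X → ℝ} {R : ℝ} (hs : ∀ y ∈ Y, 0 < s y) (hR : ∀ y ∈ Y, s y ≤ R) :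
    ∃ Z ⊆ Y, Z.Countable ∧ Z.PairwiseDisjoint (fun y => closedBall y (s y)) ∧
      Y ⊆ ⋃ y : Z, ball (y : X) (5 * s y) := by
  obtain ⟨Z, hZY, hdisj, hcov⟩ := Vitali.exists_disjoint_subfamily_covering_enlargement_closedBall
    Y (fun y => y) s R hR 4 (by norm_num)
  refine ⟨Z, hZY, hdisj.countable_of_nonempty_interior fun y hy =>
    ⟨y, ball_subset_interior_closedBall (mem_ball_self (hs y (hZY hy)))⟩, hdisj, fun y hy => ?_⟩
  obtain ⟨b, hb, hyb⟩ := hcov y hy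
  refine mem_iUnion.2 ⟨⟨b, hb⟩, mem_ball.2 ?_⟩
  have hdist : dist y b ≤ 4 * s b := hyb (mem_closedBall_self (hs y hy).le)
  linarith [hs b (hZY hb)]

lemma Doubling.exists_capaLE_of_forall_exists_ball [SecondCountableTopology X]
    (h : Doubling μ D) {a : ℝ} (ha : 1 ≤ a) :
    ∃ C : ℝ≥0, ∀ (ν : Measure X) (Y W : Set X) (M : ℝ≥0∞), MeasurableSet W →
      (∀ y ∈ Y, ∃ r : ℝ, 0 < r ∧ r ≤ 1 ∧
        μ (ball y r) ≤ ENNReal.ofReal r * (M * ν (closedBall y (a * r) ∩ W))) →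
      ∃ G : Set X, IsOpen G ∧ Y ⊆ G ∧ CapaLE μ G (C * M * ν W) := by
  obtain ⟨k, hk⟩ := pow_unbounded_of_one_lt (10 * a) one_lt_two
  refine ⟨2 * D ^ k, fun ν Y W M hW hY => ?_⟩
  choose! r hr hr1 hrM using hY
  obtain ⟨Z, hZY, hZ, hdisj, hcov⟩ := exists_countable_disjoint_closedBall_covering
    (s := fun y => a * r y) (R := a) (fun y hy => by have := hr y hy; positivity)
    (fun y hy => mul_le_of_le_one_right (by linarith) (hr1 y hy))
  have := hZ.to_subtype
  refine ⟨_, isOpen_iUnion fun y : Z => isOpen_ball, hcov,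
    (CapaLE.iUnion fun y : Z => h.capaLE_ball_of_le ha hk.le (hr y (hZY y.2)) (hr1 y (hZY y.2))
      (hrM y (hZY y.2))).mono ?_⟩
  rw [ENNReal.tsum_mul_left, ENNReal.tsum_mul_left, ← mul_assoc]
  push_cast
  refine mul_le_mul_right ?_ _
  rw [← measure_iUnion (fun y z hyz => (hdisj y.2 z.2 (Subtype.coe_ne_coe.2 hyz)).mono
    inter_subset_left inter_subset_left) fun y => measurableSet_closedBall.inter hW]
  exact measure_mono (iUnion_subset fun y => inter_subset_right)

end BallCapacity

/-! ### The `L¹` distance -/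

section DistL1

variable {α : Type*} [MeasurableSpace α]

/-- The `L¹(Ω)` distance of two functions, as an extended nonnegative real. -/
def distL1 (μ : Measure α) (Ω : Set α) (u v : α → ℝ) : ℝ≥0∞ :=
  ∫⁻ x in Ω, ENNReal.ofReal |u x - v x| ∂μ

variable {μ : Measure α} {Ω : Set α}

lemma distL1_comm (u v : α → ℝ) : distL1 μ Ω u v = distL1 μ Ω v u := by
  simp only [distL1, abs_sub_comm]

lemma distL1_mono_set {A : Set α} (hA : A ⊆ Ω) (u v : α → ℝ) : distL1 μ A u v ≤ distL1 μ Ω u v :=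
  lintegral_mono_set hA

lemma distL1_triangle {u v w : α → ℝ} (hu : Measurable u) (hv : Measurable v) :
    distL1 μ Ω u w ≤ distL1 μ Ω u v + distL1 μ Ω v w := by
  have hmeas : Measurable fun x => ENNReal.ofReal |u x - v x| := by fun_prop
  rw [distL1, distL1, distL1, ← lintegral_add_left hmeas]
  exact lintegral_mono fun x => ofReal_abs_sub_le_add _ _ _

lemma measure_inter_le_distL1_indicator {B E : Set α} (hB : MeasurableSet B) (hE : MeasurableSet E)
    (hhalf : μ (B ∩ E) ≤ μ (B \ E)) (m : ℝ) :
    μ (B ∩ E) ≤ distL1 μ B (E.indicator 1) fun _ => m := by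
  have hone : 1 ≤ ENNReal.ofReal |1 - m| + ENNReal.ofReal |m| := by
    simpa using ofReal_abs_sub_le_add 1 m 0
  rw [distL1, ← lintegral_inter_add_sdiff _ _ hE,
    setLIntegral_congr_fun (g := fun _ => ENNReal.ofReal |1 - m|) (hB.inter hE)
      fun y hy => by simp [hy.2],
    setLIntegral_congr_fun (g := fun _ => ENNReal.ofReal |m|) (hB.diff hE)
      fun y hy => by simp [hy.2],
    setLIntegral_const, setLIntegral_const]
  calc μ (B ∩ E) ≤ (ENNReal.ofReal |1 - m| + ENNReal.ofReal |m|) * μ (B ∩ E) :=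
        le_mul_of_one_le_left' hone
    _ ≤ _ := by rw [add_mul]; gcongr

end DistL1

/-! ### The Poincaré inequality for admissible pairs -/

section Poincare

omit [MeasurableSpace X] [BorelSpace X] in
lemma Curve.integral_eq_top_of_not_in {γ : Curve X} {K : Set X} (hK : IsClosed K)
    (hγ : ¬ γ.In K) (hlen : 0 < γ.len) {g : X → ℝ≥0∞} (hg : ∀ x ∉ K, g x = ∞) :
    γ.integral g = ∞ := by
  obtain ⟨t₀, ht₀, hK₀⟩ : ∃ t ∈ Icc 0 γ.len, γ.toFun t ∉ K := by
    simpa only [Curve.In, not_forall, exists_prop] using hγ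
  obtain ⟨δ, hδ, hout⟩ := Metric.mem_nhdsWithin_iff.1
    ((γ.continuousOn t₀ ht₀).eventually (hK.isOpen_compl.mem_nhds hK₀))
  set J := Icc (max 0 (t₀ - δ / 2)) (min γ.len (t₀ + δ / 2))
  have hJ : J ⊆ Icc 0 γ.len := Icc_subset_Icc (le_max_left _ _) (min_le_left _ _)
  have hvol : volume J ≠ 0 := by
    rw [Real.volume_Icc]
    simp only [ne_eq, ENNReal.ofReal_eq_zero, not_le, sub_pos, max_lt_iff, lt_min_iff]
    refine ⟨⟨hlen, ?_⟩, ?_, ?_⟩ <;> linarith [ht₀.1, ht₀.2]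
  have htop : ∀ t ∈ J, g (γ.toFun t) = ∞ := fun t ht => by
    refine hg _ (hout ⟨?_, hJ ht⟩)
    rw [mem_ball, Real.dist_eq, abs_lt]
    constructor <;> linarith [(le_max_right _ _).trans ht.1, ht.2.trans (min_le_right _ _)]
  refine top_le_iff.1 (le_trans ?_ (lintegral_mono_set hJ))
  rw [setLIntegral_congr_fun measurableSet_Icc htop, setLIntegral_const, ENNReal.top_mul hvol]

open Classical in
omit [BorelSpace X] in
lemma UGIneqOn.isUpperGradient_ite [OpensMeasurableSpace X] {K : Set X} {v : X → ℝ}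
    {g : X → ℝ≥0∞} (h : UGIneqOn K v g) (hK : IsClosed K) (hg : Measurable g) :
    IsUpperGradient v fun y => if y ∈ K then g y else ∞ := by
  refine ⟨Measurable.ite hK.measurableSet hg measurable_const, fun γ => ?_⟩
  by_cases hγ : γ.In K
  · exact (h γ hγ).trans (hγ.integral_mono fun y hy => by rw [if_pos hy])
  rcases γ.len_nonneg.eq_or_lt with hlen | hlen
  · simp [UGIneq, ← hlen]
  · rw [UGIneq, Curve.integral_eq_top_of_not_in hK hγ hlen fun y hy => if_neg hy]
    exact le_top

variable {μ : Measure X} {D : ℝ≥0} {CP lam : ℝ} {Ω : Set X} {v : X → ℝ} {g : X → ℝ≥0∞} {x : X}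
  {r : ℝ} {E : Set X}

omit [BorelSpace X] in
lemma Doubling.memL1Loc_of_mem_Icc (h : Doubling μ D) (hv : Measurable v)
    (hv01 : ∀ x, v x ∈ Icc (0 : ℝ) 1) : MemL1Loc μ univ v := by
  refine ⟨hv.aemeasurable, fun y _ => ⟨1, one_pos, ?_⟩⟩
  calc ∫⁻ z in univ ∩ ball y 1, ENNReal.ofReal |v z| ∂μ
      ≤ ∫⁻ _ in univ ∩ ball y 1, 1 ∂μ := by
        gcongr with z
        rw [abs_of_nonneg (hv01 z).1, ENNReal.ofReal_le_one]
        exact (hv01 z).2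
    _ = μ (ball y 1) := by simp
    _ < ∞ := h.measure_ball_lt_top y 1

omit [BorelSpace X] in
lemma Doubling.integrableOn_abs_sub_const (h : Doubling μ D) (hv : Measurable v)
    (hv01 : ∀ x, v x ∈ Icc (0 : ℝ) 1) (x : X) (r m : ℝ) :
    IntegrableOn (fun y => |v y - m|) (ball x r) μ := by
  have : IsFiniteMeasure (μ.restrict (ball x r)) := ⟨by simpa using h.measure_ball_lt_top x r⟩
  refine Integrable.of_bound (C := 1 + |m|) (hv.sub_const m).abs.aestronglyMeasurable
    (ae_of_all _ fun y => ?_)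
  rw [Real.norm_eq_abs, abs_abs]
  refine (abs_sub _ _).trans ?_
  gcongr
  rw [abs_of_nonneg (hv01 y).1]
  exact (hv01 y).2

lemma IsAdmissiblePair.exists_distL1_const_le (h : IsAdmissiblePair Ω v g) (hμ : Doubling μ D)
    (hP : Poincare μ CP lam) (hr : 0 < r) (hsub : closedBall x (lam * r) ⊆ Ω) :
    ∃ m : ℝ, distL1 μ (ball x r) v (fun _ => m) ≤
      ENNReal.ofReal (CP * r) * ∫⁻ y in closedBall x (lam * r), g y ∂μ := by
  classical
  obtain ⟨-, hlam, hP⟩ := hP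
  set K := closedBall x (lam * r)
  have hug : UGIneqOn K v g := fun γ hγ => h.ugIneqOn γ (hγ.mono hsub)
  have hpoin := hP x r hr v _ (hμ.memL1Loc_of_mem_Icc h.measurable h.mem_Icc)
    (hug.isUpperGradient_ite isClosed_closedBall h.measurable_grad)
  refine ⟨⨍ z in ball x r, v z ∂μ, ?_⟩
  rw [ofReal_setAverage (hμ.integrableOn_abs_sub_const h.measurable h.mem_Icc x r _)
    (ae_of_all _ fun y => abs_nonneg _),
    ENNReal.div_le_iff (hμ.measure_ball_pos x hr).ne' (hμ.measure_ball_lt_top x r).ne] at hpoin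
  refine hpoin.trans ?_
  have hball : ball x r ⊆ ball x (lam * r) := ball_subset_ball (by nlinarith)
  have hint : ∫⁻ y in ball x (lam * r), (if y ∈ K then g y else ∞) ∂μ ≤ ∫⁻ y in K, g y ∂μ := by
    refine (lintegral_mono_set ball_subset_closedBall).trans_eq ?_
    exact setLIntegral_congr_fun measurableSet_closedBall fun y hy => if_pos hy
  rw [mul_assoc]
  gcongr
  calc _ ≤ (∫⁻ y in K, g y ∂μ) / μ (ball x (lam * r)) * μ (ball x (lam * r)) := by gcongr
    _ = ∫⁻ y in K, g y ∂μ := ENNReal.div_mul_cancel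
        (hμ.measure_ball_pos _ (by positivity)).ne' (hμ.measure_ball_lt_top _ _).ne

lemma IsAdmissiblePair.measure_ball_inter_le (h : IsAdmissiblePair Ω v g) (hμ : Doubling μ D)
    (hP : Poincare μ CP lam) (hr : 0 < r) (hsub : closedBall x (lam * r) ⊆ Ω)
    (hE : MeasurableSet E) (hhalf : μ (ball x r ∩ E) ≤ μ (ball x r \ E)) :
    μ (ball x r ∩ E) ≤ ENNReal.ofReal (CP * r) * (∫⁻ y in closedBall x (lam * r), g y ∂μ) +
      distL1 μ Ω v (E.indicator 1) := by
  obtain ⟨m, hm⟩ := h.exists_distL1_const_le hμ hP hr hsub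
  have hball : ball x r ⊆ Ω :=
    ((ball_subset_ball (by nlinarith [hP.2.1])).trans ball_subset_closedBall).trans hsub
  calc μ (ball x r ∩ E) ≤ distL1 μ (ball x r) (E.indicator 1) fun _ => m :=
        measure_inter_le_distL1_indicator measurableSet_ball hE hhalf m
    _ ≤ distL1 μ (ball x r) (E.indicator 1) v + distL1 μ (ball x r) v fun _ => m :=
        distL1_triangle (measurable_one.indicator hE) h.measurable
    _ ≤ distL1 μ Ω v (E.indicator 1) + ENNReal.ofReal (CP * r) *
          ∫⁻ y in closedBall x (lam * r), g y ∂μ :=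
        add_le_add (distL1_comm _ v ▸ distL1_mono_set hball _ _) hm
    _ = _ := add_comm _ _

end Poincare

/-! ### The relaxed perimeter -/

/-- The least energy `∫_Ω g` of an admissible pair `(v, g)` on `Ω` with `v` at `L¹(Ω)`-distance at
most `δ` from the characteristic function of `E`. -/
def approxEnergy (μ : Measure X) (E Ω : Set X) (δ : ℝ≥0∞) : ℝ≥0∞ :=
  ⨅ (v : X → ℝ) (g : X → ℝ≥0∞) (_ : IsAdmissiblePair Ω v g)
    (_ : distL1 μ Ω v (E.indicator 1) ≤ δ), ∫⁻ x in Ω, g x ∂μ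

/-- The perimeter of `E` in `Ω`, relaxed over measurable functions with genuine upper gradients
instead of locally Lipschitz functions with minimal weak upper gradients. -/
def relaxedPerimeter (μ : Measure X) (E Ω : Set X) : ℝ≥0∞ :=
  ⨆ (δ : ℝ≥0∞) (_ : 0 < δ), approxEnergy μ E Ω δ

section RelaxedPerimeter

variable {μ : Measure X} {E Ω : Set X} {v : X → ℝ} {g : X → ℝ≥0∞} {δ a : ℝ≥0∞}

omit [BorelSpace X] in
lemma IsAdmissiblePair.approxEnergy_le (h : IsAdmissiblePair Ω v g)
    (hδ : distL1 μ Ω v (E.indicator 1) ≤ δ) : approxEnergy μ E Ω δ ≤ ∫⁻ x in Ω, g x ∂μ :=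
  iInf₂_le_of_le v g (iInf₂_le h hδ)

omit [BorelSpace X] in
lemma approxEnergy_le_relaxedPerimeter (hδ : 0 < δ) :
    approxEnergy μ E Ω δ ≤ relaxedPerimeter μ E Ω :=
  le_iSup₂ (f := fun δ (_ : 0 < δ) => approxEnergy μ E Ω δ) δ hδ

omit [BorelSpace X] in
lemma exists_isAdmissiblePair_of_relaxedPerimeter_lt (ha : relaxedPerimeter μ E Ω < a)
    (hδ : 0 < δ) : ∃ v g, IsAdmissiblePair Ω v g ∧ distL1 μ Ω v (E.indicator 1) ≤ δ ∧
      ∫⁻ x in Ω, g x ∂μ < a := by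
  have h := (approxEnergy_le_relaxedPerimeter (μ := μ) (E := E) (Ω := Ω) hδ).trans_lt ha
  simpa only [approxEnergy, iInf_lt_iff, exists_prop] using h

end RelaxedPerimeter

/-! ### Cutting off a neighbourhood of a set -/

/-- A Lipschitz function which vanishes at distance at most `3r/4` from `F` and equals `1` at
distance at least `7r/8`. -/
def cutoff (F : Set X) (r : ℝ) (y : X) : ℝ := clamp ((8 / r).toNNReal * (infDist y F - 3 * r / 4))

open Classical in
/-- An upper gradient of `v * cutoff F r` when `g` is one of `v`. The product rule costs the
factor `2` in the shell `r/2 < d(·, F) < r`. -/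
def cutoffGrad (F : Set X) (r : ℝ) (v : X → ℝ) (g : X → ℝ≥0∞) (y : X) : ℝ≥0∞ :=
  if infDist y F ≤ r / 2 then 0
  else if infDist y F < r then 2 * g y + (8 / r).toNNReal * ENNReal.ofReal (v y)
  else g y

section Cutoff

variable {μ : Measure X} {E F Ω : Set X} {v : X → ℝ} {g : X → ℝ≥0∞} {r : ℝ} {y : X}
  {δ : ℝ≥0∞}

omit [MeasurableSpace X] [BorelSpace X]

lemma cutoff_mem_Icc : cutoff F r y ∈ Icc (0 : ℝ) 1 := clamp_mem_Icc _

lemma lipschitzWith_cutoff : LipschitzWith (8 / r).toNNReal (cutoff F r) :=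
  lipschitzWith_clamp_mul (f := fun y => infDist y F - 3 * r / 4)
    (by simpa using! (lipschitz_infDist_pt F).sub (LipschitzWith.const (3 * r / 4))) _

lemma cutoff_eq_zero (hy : infDist y F < 3 * r / 4) : cutoff F r y = 0 :=
  clamp_of_nonpos (mul_nonpos_of_nonneg_of_nonpos NNReal.zero_le_coe (by linarith))

lemma cutoff_eq_one (hr : 0 < r) (hy : 7 * r / 8 ≤ infDist y F) : cutoff F r y = 1 := by
  refine clamp_of_one_le ?_
  rw [Real.coe_toNNReal _ (by positivity)]
  calc (1 : ℝ) = 8 / r * (r / 8) := by field_simp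
    _ ≤ 8 / r * (infDist y F - 3 * r / 4) := by gcongr; linarith

lemma le_cutoffGrad (hy : r / 2 < infDist y F) : g y ≤ cutoffGrad F r v g y := by
  rw [cutoffGrad, if_neg hy.not_ge]
  split_ifs
  · rw [two_mul, add_assoc]
    exact le_self_add
  · exact le_rfl

lemma cutoffGrad_add_indicator_le :
    cutoffGrad F r v g y + {y | infDist y F < r / 2}.indicator g y ≤
      g y + {y | r / 2 ≤ infDist y F ∧ infDist y F ≤ r}.indicator g y +
        (8 / r).toNNReal * {y | infDist y F < r}.indicator (fun y => ENNReal.ofReal (v y)) y := by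
  rw [cutoffGrad]
  split_ifs with hle hlt
  · rw [zero_add]
    exact (indicator_le_self _ _ _).trans (le_self_add.trans le_self_add)
  · have hge := not_le.1 hle
    simp [hge.not_gt, hge.le, hlt, hlt.le, two_mul]
  · have hge := not_le.1 hle
    simp only [mem_ofPred_eq, hge.not_gt, not_false_eq_true, indicator_of_notMem, add_zero]
    exact le_self_add.trans le_self_add

lemma UGIneqOn.mul_cutoff [MeasurableSpace X] [BorelSpace X] (h : UGIneqOn Ω v g)
    (hg : Measurable g) (hv : ∀ x, 0 ≤ v x) (hr : 0 < r) (F : Set X) :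
    UGIneqOn Ω (fun y => v y * cutoff F r y) (cutoffGrad F r v g) := by
  have hd : Continuous fun y => infDist y F := continuous_infDist_pt F
  refine ugIneqOn_of_locally fun x _ => ?_
  rcases lt_or_ge (infDist x F) (3 * r / 4) with hx | hx
  · refine ⟨{y | infDist y F < 3 * r / 4}, isOpen_lt hd continuous_const, hx, 1, one_pos,
      fun γ hγ _ => ugIneq_of_eqOn_const (c := 0) (hγ.mono inter_subset_left) fun y hy => ?_⟩
    rw [cutoff_eq_zero hy, mul_zero]
  rcases lt_or_ge (7 * r / 8) (infDist x F) with hx' | hx'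
  · refine ⟨{y | 7 * r / 8 < infDist y F}, isOpen_lt continuous_const hd, hx', 1, one_pos,
      fun γ hγ _ => (h γ (hγ.mono inter_subset_right)).congr_mono (hγ.mono inter_subset_left)
        (fun y hy => ?_) fun y hy => le_cutoffGrad ?_⟩
    · rw [cutoff_eq_one hr (le_of_lt hy), mul_one]
    · linarith [mem_ofPred_eq ▸ hy]
  · refine ⟨{y | r / 2 < infDist y F} ∩ {y | infDist y F < r},
      (isOpen_lt continuous_const hd).inter (isOpen_lt hd continuous_const),
      ⟨by rw [mem_ofPred_eq]; linarith, by rw [mem_ofPred_eq]; linarith⟩, r / 8, by positivity,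
      fun γ hγ hlen => ?_⟩
    have hlen' : (8 / r).toNNReal * γ.len ≤ 1 := by
      rw [Real.coe_toNNReal _ (by positivity)]
      calc 8 / r * γ.len ≤ 8 / r * (r / 8) := by gcongr
        _ = 1 := by field_simp
    refine (h.mul_of_len_le hg hv (fun _ => cutoff_mem_Icc) lipschitzWith_cutoff
      (hγ.mono inter_subset_right) hlen').congr_mono hγ (fun _ _ => rfl) fun y hy => ?_
    rw [cutoffGrad, if_neg (not_le.2 hy.1.1), if_pos (mem_ofPred.1 hy.1.2)]

lemma IsAdmissiblePair.mul_cutoff [MeasurableSpace X] [BorelSpace X] (h : IsAdmissiblePair Ω v g)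
    (hr : 0 < r) (F : Set X) :
    IsAdmissiblePair Ω (fun y => v y * cutoff F r y) (cutoffGrad F r v g) where
  measurable := h.measurable.mul lipschitzWith_cutoff.continuous.measurable
  mem_Icc y := ⟨mul_nonneg (h.mem_Icc y).1 cutoff_mem_Icc.1,
    mul_le_one₀ (h.mem_Icc y).2 cutoff_mem_Icc.1 cutoff_mem_Icc.2⟩
  measurable_grad := by
    have hd : Measurable fun y => infDist y F := (continuous_infDist_pt F).measurable
    exact Measurable.ite (measurableSet_le hd measurable_const) measurable_const
      (Measurable.ite (measurableSet_lt hd measurable_const)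
        ((h.measurable_grad.const_mul 2).add (h.measurable.ennreal_ofReal.const_mul _))
        h.measurable_grad)
  ugIneqOn := h.ugIneqOn.mul_cutoff h.measurable_grad (fun x => (h.mem_Icc x).1) hr F

end Cutoff

section CutoffEnergy

variable {μ : Measure X} {E F N Ω : Set X} {v ψ : X → ℝ} {g : X → ℝ≥0∞} {r : ℝ} {δ : ℝ≥0∞}

omit [BorelSpace X] [MetricSpace X] in
lemma distL1_mul_indicator_le (hE : MeasurableSet E) (hN : MeasurableSet N)
    (hv : ∀ x, v x ∈ Icc (0 : ℝ) 1) (hψ : ∀ x, ψ x ∈ Icc (0 : ℝ) 1) (hψN : ∀ x ∉ N, ψ x = 1) :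
    distL1 μ Ω (fun y => v y * ψ y) (E.indicator 1) ≤
      distL1 μ Ω v (E.indicator 1) + μ.restrict Ω (E ∩ N) := by
  rw [distL1, distL1, ← lintegral_indicator_one (hE.inter hN), ← lintegral_add_right _
    (measurable_one.indicator (hE.inter hN))]
  refine lintegral_mono fun y => ?_
  by_cases hyE : y ∈ E
  · by_cases hyN : y ∈ N
    · have hmul : v y * ψ y ∈ Icc (0 : ℝ) 1 :=
        ⟨mul_nonneg (hv y).1 (hψ y).1, mul_le_one₀ (hv y).2 (hψ y).1 (hψ y).2⟩
      refine le_trans ?_ le_add_self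
      simpa [hyE, hyN, abs_le] using ⟨hmul.1, by linarith [hmul.2]⟩
    · rw [hψN y hyN, mul_one]
      exact le_self_add
  · refine le_trans (ENNReal.ofReal_le_ofReal ?_) le_self_add
    simpa [hyE, abs_mul, abs_of_nonneg (hψ y).1] using
      mul_le_of_le_one_right (abs_nonneg _) (hψ y).2

omit [BorelSpace X] [MetricSpace X] in
lemma setLIntegral_le_distL1_indicator_add (hE : MeasurableSet E)
    (hv : ∀ x, v x ∈ Icc (0 : ℝ) 1) :
    ∫⁻ y in N, ENNReal.ofReal (v y) ∂μ.restrict Ω ≤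
      distL1 μ Ω v (E.indicator 1) + μ.restrict Ω (E ∩ N) := by
  have hpt : ∀ y, ENNReal.ofReal (v y) ≤
      ENNReal.ofReal |v y - E.indicator 1 y| + E.indicator 1 y := by
    intro y
    by_cases hy : y ∈ E
    · simpa [hy] using le_add_left (ENNReal.ofReal_le_one.2 (hv y).2)
    · simpa [hy] using ENNReal.ofReal_le_ofReal (le_abs_self _)
  calc ∫⁻ y in N, ENNReal.ofReal (v y) ∂μ.restrict Ω
      ≤ (∫⁻ y in N, ENNReal.ofReal |v y - E.indicator 1 y| ∂μ.restrict Ω) +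
          ∫⁻ y in N, E.indicator 1 y ∂μ.restrict Ω := by
        rw [← lintegral_add_right _ (measurable_one.indicator hE)]
        exact lintegral_mono hpt
    _ ≤ distL1 μ Ω v (E.indicator 1) + μ.restrict Ω (E ∩ N) := by
        rw [lintegral_indicator_one hE, Measure.restrict_apply hE]
        exact add_le_add (setLIntegral_le_lintegral _ _) le_rfl

lemma IsAdmissiblePair.approxEnergy_add_setLIntegral_le (h : IsAdmissiblePair Ω v g)
    (hE : MeasurableSet E) (hr : 0 < r) (F : Set X)
    (hδ : distL1 μ Ω v (E.indicator 1) + μ.restrict Ω (E ∩ {y | infDist y F < r}) ≤ δ) :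
    approxEnergy μ E Ω δ + ∫⁻ y in {y | infDist y F < r / 2}, g y ∂μ.restrict Ω ≤
      (∫⁻ y in Ω, g y ∂μ) +
        (∫⁻ y in {y | r / 2 ≤ infDist y F ∧ infDist y F ≤ r}, g y ∂μ.restrict Ω) +
        (8 / r).toNNReal *
          (distL1 μ Ω v (E.indicator 1) + μ.restrict Ω (E ∩ {y | infDist y F < r})) := by
  have hd : Measurable fun y => infDist y F := (continuous_infDist_pt F).measurable
  have hN : MeasurableSet {y | infDist y F < r} := measurableSet_lt hd measurable_const
  have hV : MeasurableSet {y | infDist y F < r / 2} := measurableSet_lt hd measurable_const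
  have hQ : MeasurableSet {y | r / 2 ≤ infDist y F ∧ infDist y F ≤ r} :=
    (measurableSet_le measurable_const hd).inter (measurableSet_le hd measurable_const)
  have hcut := h.mul_cutoff hr F
  have henergy : approxEnergy μ E Ω δ ≤ ∫⁻ y in Ω, cutoffGrad F r v g y ∂μ :=
    hcut.approxEnergy_le ((distL1_mul_indicator_le hE hN h.mem_Icc
      (fun _ => cutoff_mem_Icc) fun y hy => cutoff_eq_one hr
        (by linarith [not_lt.1 (mem_ofPred_eq ▸ hy)])).trans hδ)
  refine (add_le_add_left henergy _).trans ?_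
  rw [← lintegral_indicator hV, ← lintegral_indicator hQ, ← lintegral_add_left
    hcut.measurable_grad]
  refine (lintegral_mono fun y => cutoffGrad_add_indicator_le).trans ?_
  rw [lintegral_add_left (f := fun y => g y + _)
      (h.measurable_grad.add (h.measurable_grad.indicator hQ)),
    lintegral_add_left h.measurable_grad,
    lintegral_const_mul _ (h.measurable.ennreal_ofReal.indicator hN), lintegral_indicator hN]
  gcongr
  exact setLIntegral_le_distL1_indicator_add hE h.mem_Icc

end CutoffEnergy

/-! ### Perimeter measures -/

section WeakLimits

variable {ι : Type*} {U : Ultrafilter ι} {P : ι → FiniteMeasure X} {ν : FiniteMeasure X}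
  {a : ℝ≥0∞}

lemma exists_tendsto_ultrafilter (U : Ultrafilter ι) (f : ι → ℝ≥0∞) :
    ∃ a, Tendsto f U (𝓝 a) :=
  ⟨_, (U.map f).le_nhds_lim⟩

lemma le_measure_of_tendsto_of_isClosed (hP : Tendsto P U (𝓝 ν)) {F : Set X} (hF : IsClosed F)
    (ha : Tendsto (fun i => (P i : Measure X) F) U (𝓝 a)) : a ≤ (ν : Measure X) F :=
  ha.limsup_eq ▸ FiniteMeasure.limsup_measure_closed_le_of_tendsto hP hF

lemma measure_le_of_tendsto_of_isOpen (hP : Tendsto P U (𝓝 ν)) {V : Set X} (hV : IsOpen V)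
    (ha : Tendsto (fun i => (P i : Measure X) V) U (𝓝 a)) : (ν : Measure X) V ≤ a := by
  obtain ⟨b, hb⟩ := exists_tendsto_ultrafilter U fun i => (P i : Measure X) Vᶜ
  have hmass : Tendsto (fun i => (P i : Measure X) univ) U (𝓝 ((ν : Measure X) univ)) := by
    simpa only [Function.comp_def, FiniteMeasure.ennreal_mass] using
      ENNReal.tendsto_coe.2 ((FiniteMeasure.continuous_mass.tendsto ν).comp hP)
  have hsum : (ν : Measure X) univ = a + b := by
    refine tendsto_nhds_unique hmass ((ha.add hb).congr fun i => ?_)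
    exact measure_add_measure_compl hV.measurableSet
  have hne : (ν : Measure X) Vᶜ ≠ ∞ := measure_ne_top _ _
  rw [← ENNReal.add_le_add_iff_right hne, measure_add_measure_compl hV.measurableSet, hsum]
  gcongr
  exact le_measure_of_tendsto_of_isClosed hP hV.isClosed_compl hb

lemma exists_finiteMeasure_tendsto_ultrafilter {K : Set X} (hK : IsCompact K) {C : ℝ≥0}
    (hmass : ∀ i, (P i).mass ≤ C) (hsupp : ∀ i, P i Kᶜ = 0) (U : Ultrafilter ι) :
    ∃ ν : FiniteMeasure X, Tendsto P U (𝓝 ν) := by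
  have hmem : ∀ᶠ i in U, P i ∈ {μ : FiniteMeasure X | μ.mass ≤ C ∧ μ Kᶜ = 0} :=
    Eventually.of_forall fun i => ⟨hmass i, hsupp i⟩
  obtain ⟨ν, -, hν⟩ := (isCompact_setOfPred_finiteMeasure_le_of_isCompact C hK).ultrafilter_le_nhds
    (U.map P) (le_principal_iff.2 hmem)
  exact ⟨ν, hν⟩

end WeakLimits

/-- The energy measures `g i dμ` of the admissible pairs `(v i, g i)`, which form a minimizing
sequence for the relaxed perimeter of `E` in `Ω`, converge weakly to `ν` along `U`. -/
structure IsMinimizingSequence (μ : Measure X) (E Ω : Set X) (U : Ultrafilter ℕ) (v : ℕ → X → ℝ)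
    (g : ℕ → X → ℝ≥0∞) (ν : Measure X) : Prop where
  admissible : ∀ i, IsAdmissiblePair Ω (v i) (g i)
  tendsto_distL1 : Tendsto (fun i => distL1 μ Ω (v i) (E.indicator 1)) U (𝓝 0)
  energy_le : ∀ {a}, Tendsto (fun i => ∫⁻ x in Ω, g i x ∂μ) U (𝓝 a) → a ≤ relaxedPerimeter μ E Ω
  le_of_isClosed : ∀ {F a}, IsClosed F →
    Tendsto (fun i => ∫⁻ x in F, g i x ∂μ.restrict Ω) U (𝓝 a) → a ≤ ν F
  le_of_isOpen : ∀ {V a}, IsOpen V →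
    Tendsto (fun i => ∫⁻ x in V, g i x ∂μ.restrict Ω) U (𝓝 a) → ν V ≤ a

/-- A weak limit of the energy measures of a minimizing sequence for the relaxed perimeter of `E`
in `Ω`; it plays the role of the perimeter measure `P(E, ·)`. -/
def IsPerimeterMeasure (μ : Measure X) (E Ω : Set X) (ν : Measure X) : Prop :=
  ∃ U v g, IsMinimizingSequence μ E Ω U v g ν

section PerimeterMeasure

variable {μ ν : Measure X} {E Ω F : Set X} {δ : ℝ≥0∞} {x : X} {r CP lam : ℝ} {D : ℝ≥0}

lemma tendsto_inv_natCast_add_one :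
    Tendsto (fun i : ℕ => ((i : ℝ≥0∞) + 1)⁻¹) atTop (𝓝 0) := by
  simpa using (tendsto_add_atTop_iff_nat 1).2 ENNReal.tendsto_inv_nat_nhds_zero

lemma exists_isPerimeterMeasure [ProperSpace X] (hΩ : Bornology.IsBounded Ω)
    (hΩm : MeasurableSet Ω) (hfin : relaxedPerimeter μ E Ω ≠ ∞) :
    ∃ ν, IsPerimeterMeasure μ E Ω ν := by
  set T := relaxedPerimeter μ E Ω
  have hpos (i : ℕ) : 0 < ((i : ℝ≥0∞) + 1)⁻¹ := by simp
  choose v g hadm hdist henergy using fun i : ℕ => exists_isAdmissiblePair_of_relaxedPerimeter_lt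
    (ENNReal.lt_add_right hfin (hpos i).ne') (hpos i)
  have hle (i : ℕ) : ∫⁻ x in Ω, g i x ∂μ ≤ T + 1 := (henergy i).le.trans (by gcongr; simp)
  have hT : T + 1 ≠ ∞ := by finiteness
  let P (i : ℕ) : FiniteMeasure X := ⟨(μ.restrict Ω).withDensity (g i),
    isFiniteMeasure_withDensity ((hle i).trans_lt hT.lt_top).ne⟩
  have hmass (i : ℕ) : (P i).mass ≤ (T + 1).toNNReal := by
    rw [← ENNReal.coe_le_coe, FiniteMeasure.ennreal_mass, ENNReal.coe_toNNReal hT]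
    simpa [P] using hle i
  have hsupp (i : ℕ) : P i (closure Ω)ᶜ = 0 := by
    rw [← ENNReal.coe_eq_zero, FiniteMeasure.ennreal_coeFn_eq_coeFn_toMeasure]
    refine withDensity_absolutelyContinuous _ _ ?_
    rw [Measure.restrict_apply' hΩm]
    exact measure_mono_null (fun y hy => hy.1 (subset_closure hy.2)) measure_empty
  obtain ⟨ν, hν⟩ := exists_finiteMeasure_tendsto_ultrafilter hΩ.isCompact_closure hmass hsupp
    (hyperfilter ℕ)
  have hP (i : ℕ) {A : Set X} (hA : MeasurableSet A) :
      (P i : Measure X) A = ∫⁻ x in A, g i x ∂μ.restrict Ω := withDensity_apply _ hA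
  have hlim := tendsto_inv_natCast_add_one.mono_left Nat.hyperfilter_le_atTop
  refine ⟨ν, hyperfilter ℕ, v, g, hadm,
    tendsto_of_tendsto_of_tendsto_of_le_of_le tendsto_const_nhds hlim (fun _ => zero_le) hdist,
    fun {a} ha => ?_, fun {F a} hF ha => ?_, fun {V a} hV ha => ?_⟩
  · simpa using le_of_tendsto_of_tendsto' ha (hlim.const_add T) fun i => (henergy i).le
  · exact le_measure_of_tendsto_of_isClosed hν hF (by simpa only [hP _ hF.measurableSet] using ha)
  · exact measure_le_of_tendsto_of_isOpen hν hV (by simpa only [hP _ hV.measurableSet] using ha)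

omit [BorelSpace X] in
lemma IsPerimeterMeasure.measure_univ_le (hν : IsPerimeterMeasure μ E Ω ν) :
    ν univ ≤ relaxedPerimeter μ E Ω := by
  obtain ⟨U, v, g, h⟩ := hν
  obtain ⟨a, ha⟩ := exists_tendsto_ultrafilter U fun i => ∫⁻ x in Ω, g i x ∂μ
  exact (h.le_of_isOpen isOpen_univ (by simpa only [Measure.restrict_univ] using ha)).trans
    (h.energy_le ha)

lemma IsPerimeterMeasure.measure_ball_inter_le (hν : IsPerimeterMeasure μ E Ω ν)
    (hμ : Doubling μ D) (hP : Poincare μ CP lam) (hE : MeasurableSet E) (hr : 0 < r)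
    (hsub : closedBall x (lam * r) ⊆ Ω) (hhalf : μ (ball x r ∩ E) ≤ μ (ball x r \ E)) :
    μ (ball x r ∩ E) ≤ ENNReal.ofReal (CP * r) * ν (closedBall x (lam * r)) := by
  obtain ⟨U, v, g, h⟩ := hν
  set B := closedBall x (lam * r)
  obtain ⟨b, hb⟩ := exists_tendsto_ultrafilter U fun i => ∫⁻ x in B, g i x ∂μ.restrict Ω
  have hlim := (ENNReal.Tendsto.const_mul hb (Or.inr (ENNReal.ofReal_ne_top (r := CP * r)))).add
    h.tendsto_distL1
  calc μ (ball x r ∩ E) ≤ ENNReal.ofReal (CP * r) * b + 0 := ge_of_tendsto' hlim fun i => by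
        rw [Measure.restrict_restrict measurableSet_closedBall, inter_eq_self_of_subset_left hsub]
        exact (h.admissible i).measure_ball_inter_le hμ hP hr hsub hE hhalf
    _ ≤ ENNReal.ofReal (CP * r) * ν B := by
        rw [add_zero]
        gcongr
        exact h.le_of_isClosed isClosed_closedBall hb

lemma IsPerimeterMeasure.measure_add_approxEnergy_le (hν : IsPerimeterMeasure μ E Ω ν)
    (hE : MeasurableSet E) (hr : 0 < r)
    (hδ : μ.restrict Ω (E ∩ {y | infDist y F < r}) < δ) :
    ν F + approxEnergy μ E Ω δ ≤ relaxedPerimeter μ E Ω +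
      ν {y | r / 2 ≤ infDist y F ∧ infDist y F ≤ r} +
        (8 / r).toNNReal * μ.restrict Ω (E ∩ {y | infDist y F < r}) := by
  obtain ⟨U, v, g, h⟩ := hν
  have hd : Continuous fun y => infDist y F := continuous_infDist_pt F
  set V := {y | infDist y F < r / 2}
  set Q := {y | r / 2 ≤ infDist y F ∧ infDist y F ≤ r}
  set s := μ.restrict Ω (E ∩ {y | infDist y F < r})
  have hV : IsOpen V := isOpen_lt hd continuous_const
  have hQ : IsClosed Q := (isClosed_le continuous_const hd).inter (isClosed_le hd continuous_const)
  have hFV : F ⊆ V := fun y hy => by simpa [V, infDist_zero_of_mem hy] using hr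
  obtain ⟨a, ha⟩ := exists_tendsto_ultrafilter U fun i => ∫⁻ x in Ω, g i x ∂μ
  obtain ⟨b, hb⟩ := exists_tendsto_ultrafilter U fun i => ∫⁻ x in V, g i x ∂μ.restrict Ω
  obtain ⟨q, hq⟩ := exists_tendsto_ultrafilter U fun i => ∫⁻ x in Q, g i x ∂μ.restrict Ω
  have hdist : Tendsto (fun i => distL1 μ Ω (v i) (E.indicator 1) + s) U (𝓝 s) := by
    simpa using h.tendsto_distL1.add_const s
  have hlim := (ha.add hq).add
    (ENNReal.Tendsto.const_mul hdist (Or.inr (ENNReal.coe_ne_top (r := (8 / r).toNNReal))))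
  calc ν F + approxEnergy μ E Ω δ ≤ approxEnergy μ E Ω δ + b := by
        rw [add_comm]
        gcongr
        exact (measure_mono hFV).trans (h.le_of_isOpen hV hb)
    _ ≤ a + q + (8 / r).toNNReal * s := by
        refine le_of_tendsto_of_tendsto (hb.const_add _) hlim ?_
        filter_upwards [hdist.eventually_le_const hδ] with i hi
        exact (h.admissible i).approxEnergy_add_setLIntegral_le hE hr F hi
    _ ≤ _ := by
        gcongr
        exacts [h.energy_le ha, h.le_of_isClosed hQ hq]

end PerimeterMeasure

/-! ### Perimeter measures do not charge sets of low density -/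

section LowDensity

variable {μ ν : Measure X} {E Ω F A W : Set X} {δ : ℝ≥0∞} {r CP lam : ℝ} {D : ℝ≥0}

omit [MetricSpace X] [BorelSpace X] in
lemma measure_inter_le_measure_sdiff (hE : MeasurableSet E) (hA : μ A ≠ ∞)
    (h : μ (A ∩ E) ≤ 2⁻¹ * μ A) : μ (A ∩ E) ≤ μ (A \ E) := by
  refine (ENNReal.add_le_add_iff_left (a := μ (A ∩ E))
    (measure_ne_top_of_subset inter_subset_left hA)).1 ?_
  calc μ (A ∩ E) + μ (A ∩ E) ≤ 2⁻¹ * μ A + 2⁻¹ * μ A := add_le_add h h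
    _ = μ (A ∩ E) + μ (A \ E) := by
        rw [measure_inter_add_sdiff A hE, ← add_mul, ENNReal.inv_two_add_inv_two, one_mul]

lemma Doubling.sum_measure_closedBall_le (h : Doubling μ D) {k : ℕ} {R : ℝ} {ρ : ℝ≥0} (hρ : 0 < ρ)
    {S : Finset X} (hsep : IsSeparated ρ (S : Set X)) (hk : 2 * R + ρ ≤ 2 ^ k * (ρ / 2))
    (hW : MeasurableSet W) (hS : ∀ c ∈ S, closedBall c R ⊆ W) (ν : Measure X) :
    ∑ c ∈ S, ν (closedBall c R) ≤ D ^ k * ν W := by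
  classical
  have hoverlap (z : X) : ∑ c ∈ S, (closedBall c R).indicator (1 : X → ℝ≥0∞) z ≤
      W.indicator (fun _ => (D : ℝ≥0∞) ^ k) z := by
    by_cases hz : z ∈ W
    · have hcount : ∑ c ∈ S, (closedBall c R).indicator (1 : X → ℝ≥0∞) z =
          (S.filter fun c => z ∈ closedBall c R).card := by
        simp only [indicator, Pi.one_apply, Finset.sum_boole]
      rw [hcount, indicator_of_mem hz]
      refine h.card_le_of_isSeparated hρ (y := z) (fun c hc => ?_) (hsep.subset fun c hc => ?_) hk
      · exact mem_closedBall_comm.1 (Finset.mem_filter.1 hc).2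
      · exact (Finset.mem_filter.1 hc).1
    · rw [indicator_of_notMem hz, Finset.sum_eq_zero]
      exact fun c hc => indicator_of_notMem (fun hzc => hz (hS c hc hzc)) _
  calc ∑ c ∈ S, ν (closedBall c R) = ∫⁻ z, ∑ c ∈ S, (closedBall c R).indicator 1 z ∂ν := by
        rw [lintegral_finsetSum _ fun c _ => measurable_one.indicator measurableSet_closedBall]
        simp only [lintegral_indicator_one measurableSet_closedBall]
    _ ≤ ∫⁻ z, W.indicator (fun _ => (D : ℝ≥0∞) ^ k) z ∂ν := lintegral_mono hoverlap
    _ = D ^ k * ν W := by rw [lintegral_indicator hW, setLIntegral_const]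

lemma Doubling.measure_inter_le_of_forall_ball (h : Doubling μ D) {k : ℕ} {R s : ℝ} {a : ℝ≥0∞}
    (hs : 0 < s) (hk : 4 * R + s ≤ 2 ^ k * (s / 2)) (hA : Bornology.IsBounded A)
    (hW : MeasurableSet W) (hsub : ∀ c ∈ A, closedBall c R ⊆ W)
    (hball : ∀ c ∈ A, μ (ball c s ∩ E) ≤ a * ν (closedBall c R)) :
    μ (E ∩ A) ≤ a * (D ^ k * ν W) := by
  lift s to ℝ≥0 using hs.le
  have hs : 0 < s := hs
  obtain ⟨S, hSA, hsep, hcover⟩ := h.exists_finset_isSeparated_isCover hA (half_pos hs)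
  have hcov : E ∩ A ⊆ ⋃ c ∈ S, ball c s ∩ E := by
    rintro y ⟨hyE, hyA⟩
    obtain ⟨c, hc, hyc⟩ := mem_iUnion₂.1 (isCover_iff_subset_iUnion_closedBall.1 hcover hyA)
    exact mem_iUnion₂.2 ⟨c, hc, closedBall_subset_ball (NNReal.half_lt_self hs.ne') hyc, hyE⟩
  calc μ (E ∩ A) ≤ ∑ c ∈ S, μ (ball c s ∩ E) :=
        (measure_mono hcov).trans (measure_biUnion_finset_le _ _)
    _ ≤ ∑ c ∈ S, a * ν (closedBall c R) := Finset.sum_le_sum fun c hc => hball c (hSA hc)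
    _ = a * ∑ c ∈ S, ν (closedBall c R) := by rw [Finset.mul_sum]
    _ ≤ a * (D ^ k * ν W) := by
        gcongr
        refine h.sum_measure_closedBall_le (half_pos hs) hsep ?_ hW (fun c hc => hsub c (hSA hc)) ν
        push_cast
        linarith

lemma IsPerimeterMeasure.measure_inter_infDist_lt_le (hν : IsPerimeterMeasure μ E Ω ν)
    (hμ : Doubling μ D) (hP : Poincare μ CP lam) (hE : MeasurableSet E) {j k : ℕ} {s : ℝ}
    (hj : 8 * lam + 2 ≤ 2 ^ j) (hk : lam ≤ 2 ^ k) (hs : 0 < s) (hF : Bornology.IsBounded F)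
    (hne : F.Nonempty) (hΩ : cthickening (2 * (2 ^ k * s)) F ⊆ Ω)
    (hhalf : ∀ c, infDist c F < 2 ^ k * s → μ (ball c s ∩ E) ≤ 2⁻¹ * μ (ball c s)) :
    μ (E ∩ {y | infDist y F < 2 ^ k * s}) ≤
      ENNReal.ofReal (CP * s) * (D ^ j * ν (cthickening (2 * (2 ^ k * s)) F)) := by
  have hlams : lam * s ≤ 2 ^ k * s := by gcongr
  have hsub (c : X) (hc : infDist c F < 2 ^ k * s) :
      closedBall c (lam * s) ⊆ cthickening (2 * (2 ^ k * s)) F := fun z hz => by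
    obtain ⟨y, hy, hcy⟩ := (infDist_lt_iff hne).1 hc
    exact mem_cthickening_of_dist_le z y _ F hy
      (by linarith [dist_triangle z c y, mem_closedBall.1 hz])
  have hbdd : Bornology.IsBounded {y | infDist y F < 2 ^ k * s} := by
    refine (hF.cthickening (δ := 2 ^ k * s)).subset fun c hc => ?_
    obtain ⟨y, hy, hcy⟩ := (infDist_lt_iff hne).1 hc
    exact mem_cthickening_of_dist_le c y _ F hy hcy.le
  refine hμ.measure_inter_le_of_forall_ball (R := lam * s) hs (by nlinarith) hbdd
    isClosed_cthickening.measurableSet hsub fun c hc => ?_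
  exact hν.measure_ball_inter_le hμ hP hE hs ((hsub c hc).trans hΩ)
    (measure_inter_le_measure_sdiff hE (hμ.measure_ball_lt_top c s).ne (hhalf c hc))

omit [BorelSpace X] in
lemma Doubling.measure_ball_inter_le_of_dist_lt (hμ : Doubling μ D) {k : ℕ} {s : ℝ} {x y : X}
    (hs : 0 < s) (hxy : dist x y < 2 ^ k * s)
    (hy : μ (ball y (2 * (2 ^ k * s)) ∩ E) ≤
      ((2 * D ^ (k + 2))⁻¹ : ℝ≥0) * μ (ball y (2 * (2 ^ k * s)))) :
    μ (ball x s ∩ E) ≤ 2⁻¹ * μ (ball x s) := by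
  have hD : (1 : ℝ≥0) ≤ D := hμ.one_le
  have hk : s ≤ 2 ^ k * s := le_mul_of_one_le_left hs.le (one_le_pow₀ one_le_two)
  calc μ (ball x s ∩ E) ≤ μ (ball y (2 * (2 ^ k * s)) ∩ E) := by
        gcongr
        exact ball_subset_ball' (by linarith)
    _ ≤ ((2 * D ^ (k + 2))⁻¹ : ℝ≥0) * (D ^ (k + 2) * μ (ball x s)) := hy.trans (by
        gcongr
        exact hμ.measure_ball_le hs (by rw [dist_comm, pow_add]; linarith))
    _ = ((2⁻¹ : ℝ≥0) : ℝ≥0∞) * μ (ball x s) := by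
        rw [← mul_assoc]
        congr 1
        norm_cast
        field_simp
    _ = 2⁻¹ * μ (ball x s) := by rw [ENNReal.coe_inv two_ne_zero, ENNReal.coe_ofNat]

/-- Covering at the scale `2⁻ᵏ r` brings the isoperimetric constant below the factor `1 / 16`,
which the cut-off argument can absorb. -/
lemma Doubling.exists_density_measure_inter_infDist_lt_le (hμ : Doubling μ D)
    (hP : Poincare μ CP lam) :
    ∃ γ : ℝ≥0, 0 < γ ∧ γ ≤ 2⁻¹ ∧ ∀ {E Ω F : Set X} {ν : Measure X} {r : ℝ}, MeasurableSet E →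
      IsPerimeterMeasure μ E Ω ν → Bornology.IsBounded F → F.Nonempty → 0 < r →
      cthickening (2 * r) F ⊆ Ω → (∀ y ∈ F, μ (ball y (2 * r) ∩ E) ≤ γ * μ (ball y (2 * r))) →
      μ (E ∩ {y | infDist y F < r}) ≤ ENNReal.ofReal (r / 16) * ν (cthickening (2 * r) F) := by
  have hCP : 1 ≤ CP := hP.1
  have hD : (1 : ℝ≥0) ≤ D := hμ.one_le
  obtain ⟨j, hj⟩ := pow_unbounded_of_one_lt (8 * lam + 2) one_lt_two
  obtain ⟨k, hk⟩ := pow_unbounded_of_one_lt (max lam (16 * CP * (D : ℝ) ^ j)) one_lt_two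
  obtain ⟨hklam, hkCP⟩ := max_lt_iff.1 hk
  refine ⟨(2 * D ^ (k + 2))⁻¹, by positivity, ?_, ?_⟩
  · gcongr
    exact le_mul_of_one_le_right zero_le (one_le_pow₀ hD)
  intro E Ω F ν r hE hν hF hne hr hΩ hdens
  obtain ⟨s, rfl⟩ : ∃ s, r = 2 ^ k * s := ⟨r / 2 ^ k, by field_simp⟩
  have hs : 0 < s := pos_of_mul_pos_right hr (by positivity)
  calc μ (E ∩ {y | infDist y F < 2 ^ k * s})
    _ ≤ ENNReal.ofReal (CP * s) * (D ^ j * ν (cthickening (2 * (2 ^ k * s)) F)) := by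
        refine hν.measure_inter_infDist_lt_le hμ hP hE hj.le hklam.le hs hF hne hΩ fun c hc => ?_
        obtain ⟨y, hy, hcy⟩ := (infDist_lt_iff hne).1 hc
        exact hμ.measure_ball_inter_le_of_dist_lt hs hcy (hdens y hy)
    _ = ENNReal.ofReal (CP * s * (D : ℝ) ^ j) * ν (cthickening (2 * (2 ^ k * s)) F) := by
        rw [ENNReal.ofReal_mul (p := CP * s) (by positivity), ENNReal.ofReal_pow D.coe_nonneg,
          ENNReal.ofReal_coe_nnreal, mul_assoc]
    _ ≤ _ := by
        gcongr
        nlinarith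

lemma measure_add_measure_annulus_le_cthickening (hF : F.Nonempty) (hr : 0 < r) :
    ν F + ν {y | r / 2 ≤ infDist y F ∧ infDist y F ≤ r} ≤ ν (cthickening (2 * r) F) := by
  have hd : Continuous fun y => infDist y F := continuous_infDist_pt F
  have hdisj : Disjoint F {y | r / 2 ≤ infDist y F ∧ infDist y F ≤ r} :=
    Set.disjoint_left.2 fun y hy hy' => by
      linarith [hy'.1, infDist_zero_of_mem hy]
  rw [← measure_union hdisj ((isClosed_le continuous_const hd).inter
    (isClosed_le hd continuous_const)).measurableSet]
  refine measure_mono (union_subset (self_subset_cthickening F) fun y hy => ?_)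
  obtain ⟨z, hz, hyz⟩ := (infDist_lt_iff (r := 2 * r) hF).1 (hy.2.trans_lt (by linarith))
  exact mem_cthickening_of_dist_le y z _ F hz hyz.le

lemma IsPerimeterMeasure.two_mul_measure_add_approxEnergy_le (hν : IsPerimeterMeasure μ E Ω ν)
    (hE : MeasurableSet E) (hF : F.Nonempty) (hr : 0 < r)
    (hthin : μ.restrict Ω (E ∩ {y | infDist y F < r}) ≤
      ENNReal.ofReal (r / 16) * ν (cthickening (2 * r) F))
    (hδ : ENNReal.ofReal (r / 16) * ν (cthickening (2 * r) F) < δ) :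
    2 * ν F + approxEnergy μ E Ω δ ≤
      relaxedPerimeter μ E Ω + (1 + 2⁻¹) * ν (cthickening (2 * r) F) := by
  set Q := {y | r / 2 ≤ infDist y F ∧ infDist y F ≤ r}
  set T := ν (cthickening (2 * r) F)
  have hcoef : ((8 / r).toNNReal : ℝ≥0∞) * ENNReal.ofReal (r / 16) = 2⁻¹ := by
    change ENNReal.ofReal (8 / r) * _ = _
    have hreal : 8 / r * (r / 16) = (2 : ℝ)⁻¹ := by
      field_simp
      norm_num
    rw [← ENNReal.ofReal_mul (by positivity), hreal, ENNReal.ofReal_inv_of_pos two_pos,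
      ENNReal.ofReal_ofNat]
  calc 2 * ν F + approxEnergy μ E Ω δ = ν F + (ν F + approxEnergy μ E Ω δ) := by ring
    _ ≤ ν F + (relaxedPerimeter μ E Ω + ν Q +
          (8 / r).toNNReal * (ENNReal.ofReal (r / 16) * T)) := by
        refine add_le_add le_rfl ?_
        exact (hν.measure_add_approxEnergy_le hE hr (hthin.trans_lt hδ)).trans (by gcongr)
    _ = relaxedPerimeter μ E Ω + (ν F + ν Q) + 2⁻¹ * T := by
        rw [← mul_assoc, hcoef]
        ring
    _ ≤ relaxedPerimeter μ E Ω + T + 2⁻¹ * T := by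
        gcongr
        exact measure_add_measure_annulus_le_cthickening hF hr
    _ = _ := by ring

/-- Cutting `E` off near `F` would lower its relaxed perimeter if `ν F` were positive. -/
lemma IsPerimeterMeasure.measure_eq_zero_of_eventually_thin [ProperSpace X]
    (hν : IsPerimeterMeasure μ E Ω ν) (hE : MeasurableSet E)
    (hfin : relaxedPerimeter μ E Ω ≠ ∞) (hF : IsCompact F) (hne : F.Nonempty)
    (hthin : ∀ᶠ r in 𝓝[>] 0, μ.restrict Ω (E ∩ {y | infDist y F < r}) ≤
      ENNReal.ofReal (r / 16) * ν (cthickening (2 * r) F)) : ν F = 0 := by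
  have : IsFiniteMeasure ν := ⟨hν.measure_univ_le.trans_lt hfin.lt_top⟩
  have hscale : Tendsto (fun r : ℝ => 2 * r) (𝓝[>] 0) (𝓝 0) :=
    tendsto_nhdsWithin_of_tendsto_nhds (Continuous.tendsto' (by fun_prop) _ _ (mul_zero 2))
  have hcth : Tendsto (fun r : ℝ => ν (cthickening (2 * r) F)) (𝓝[>] 0) (𝓝 (ν F)) :=
    (tendsto_measure_cthickening_of_isCompact hF).comp hscale
  have hsmall : Tendsto (fun r : ℝ => ENNReal.ofReal (r / 16) * ν (cthickening (2 * r) F))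
      (𝓝[>] 0) (𝓝 0) := by
    have h0 : Tendsto (fun r : ℝ => ENNReal.ofReal (r / 16)) (𝓝[>] 0) (𝓝 0) :=
      tendsto_nhdsWithin_of_tendsto_nhds
        ((ENNReal.continuous_ofReal.comp (continuous_id.div_const 16)).tendsto' _ _ (by simp))
    simpa using ENNReal.Tendsto.mul h0 (Or.inr (measure_ne_top ν F)) hcth (Or.inr (by simp))
  have hle (δ : ℝ≥0∞) (hδ : 0 < δ) :
      2 * ν F + approxEnergy μ E Ω δ ≤ relaxedPerimeter μ E Ω + (1 + 2⁻¹) * ν F := by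
    refine ge_of_tendsto ((ENNReal.Tendsto.const_mul hcth (Or.inr (by simp))).const_add _) ?_
    filter_upwards [hthin, hsmall.eventually_lt_const hδ, self_mem_nhdsWithin] with r h₁ h₂ hr
    exact hν.two_mul_measure_add_approxEnergy_le hE hne hr h₁ h₂
  have hcompare : relaxedPerimeter μ E Ω + 2 * ν F ≤
      relaxedPerimeter μ E Ω + (1 + 2⁻¹) * ν F := by
    rw [add_comm]
    nth_rw 1 [relaxedPerimeter]
    rw [ENNReal.add_biSup' ⟨1, one_pos⟩]
    exact iSup₂_le hle
  have hcancel : (1 + 2⁻¹) * ν F + 2⁻¹ * ν F ≤ (1 + 2⁻¹) * ν F + 0 := by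
    rw [add_zero, ← add_mul, add_assoc, ENNReal.inv_two_add_inv_two, one_add_one_eq_two]
    exact (ENNReal.add_le_add_iff_left hfin).1 hcompare
  have hne_top : (1 + 2⁻¹) * ν F ≠ ∞ := ENNReal.mul_ne_top (by simp) (measure_ne_top ν F)
  simpa using (ENNReal.add_le_add_iff_left hne_top).1 hcancel

end LowDensity

/-- The points at which `E` has density at most `γ` in all balls of radius less than `R`. -/
def lowDensitySetBelow (μ : Measure X) (E : Set X) (γ : ℝ≥0) (R : ℝ) : Set X :=
  {y | ∀ ρ : ℝ, 0 < ρ → ρ < R → μ (ball y ρ ∩ E) ≤ γ * μ (ball y ρ)}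

/-- The points at which `E` has density at most `γ` in all sufficiently small balls. -/
def lowDensitySet (μ : Measure X) (E : Set X) (γ : ℝ≥0) : Set X :=
  {y | ∀ᶠ ρ in 𝓝[>] (0 : ℝ), μ (ball y ρ ∩ E) ≤ γ * μ (ball y ρ)}

section LowDensitySet

variable {μ : Measure X} {E : Set X} {γ D : ℝ≥0} {R CP lam : ℝ}

omit [BorelSpace X] in
lemma lowDensitySet_subset_iUnion :
    lowDensitySet μ E γ ⊆ ⋃ m : ℕ, lowDensitySetBelow μ E γ (1 / ((m : ℝ) + 1)) := by
  intro y hy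
  obtain ⟨s, hs, hsub⟩ := mem_nhdsGT_iff_exists_Ioo_subset.1 hy
  obtain ⟨m, hm⟩ := exists_nat_one_div_lt (show 0 < s from hs)
  exact mem_iUnion.2 ⟨m, fun ρ hρ hρm => hsub ⟨hρ, hρm.trans hm⟩⟩

omit [BorelSpace X] in
lemma Doubling.closure_lowDensitySetBelow_subset (hμ : Doubling μ D) :
    closure (lowDensitySetBelow μ E (γ / D ^ 2) R) ⊆ lowDensitySetBelow μ E γ (R / 2) := by
  intro y hy ρ hρ hρR
  have hD : (1 : ℝ≥0) ≤ D := hμ.one_le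
  obtain ⟨z, hz, hyz⟩ := Metric.mem_closure_iff.1 hy ρ hρ
  calc μ (ball y ρ ∩ E) ≤ μ (ball z (2 * ρ) ∩ E) := by
        gcongr
        exact ball_subset_ball' (by linarith)
    _ ≤ ((γ / D ^ 2 : ℝ≥0) : ℝ≥0∞) * μ (ball z (2 * ρ)) := hz _ (by positivity) (by linarith)
    _ ≤ ((γ / D ^ 2 : ℝ≥0) : ℝ≥0∞) * (D ^ 2 * μ (ball y ρ)) := by
        gcongr
        exact hμ.measure_ball_le hρ (by rw [dist_comm]; linarith)
    _ = γ * μ (ball y ρ) := by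
        rw [← mul_assoc]
        congr 1
        norm_cast
        field_simp

lemma Doubling.exists_density_measure_compact_eq_zero [ProperSpace X] (hμ : Doubling μ D)
    (hP : Poincare μ CP lam) :
    ∃ γ : ℝ≥0, 0 < γ ∧ γ ≤ 2⁻¹ ∧ ∀ {E Ω F : Set X} {ν : Measure X} {R : ℝ}, MeasurableSet E →
      IsOpen Ω → IsPerimeterMeasure μ E Ω ν → relaxedPerimeter μ E Ω ≠ ∞ → IsCompact F →
      F ⊆ Ω → 0 < R → F ⊆ lowDensitySetBelow μ E γ R → ν F = 0 := by
  obtain ⟨γ, hγ0, hγ, hest⟩ := hμ.exists_density_measure_inter_infDist_lt_le hP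
  refine ⟨γ, hγ0, hγ, fun {E Ω F ν R} hE hΩ hν hfin hF hFΩ hR hlow => ?_⟩
  rcases F.eq_empty_or_nonempty with rfl | hne
  · exact measure_empty
  obtain ⟨δ, hδ, hδΩ⟩ := hF.exists_cthickening_subset_open hΩ hFΩ
  refine hν.measure_eq_zero_of_eventually_thin hE hfin hF hne ?_
  filter_upwards [Ioo_mem_nhdsGT (half_pos hR), Ioo_mem_nhdsGT (half_pos hδ)] with r hrR hrδ
  refine (Measure.restrict_apply_le _ _).trans (hest hE hν hF.isBounded hne hrR.1 ?_ fun y hy => ?_)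
  · exact (cthickening_mono (by linarith [hrδ.2]) F).trans hδΩ
  · exact hlow hy _ (by linarith [hrR.1]) (by linarith [hrR.2])

lemma Doubling.exists_density_measure_lowDensitySet_inter_eq_zero [ProperSpace X]
    (hμ : Doubling μ D) (hP : Poincare μ CP lam) :
    ∃ γ : ℝ≥0, 0 < γ ∧ γ ≤ 2⁻¹ ∧ ∀ {E Ω B : Set X} {ν : Measure X}, MeasurableSet E →
      IsOpen Ω → IsPerimeterMeasure μ E Ω ν → relaxedPerimeter μ E Ω ≠ ∞ →
      Bornology.IsBounded B → closure B ⊆ Ω → ν (lowDensitySet μ E γ ∩ B) = 0 := by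
  obtain ⟨γ, hγ0, hγ, hzero⟩ := hμ.exists_density_measure_compact_eq_zero hP
  have hD : (1 : ℝ≥0) ≤ D := hμ.one_le
  refine ⟨γ / D ^ 2, by positivity, (div_le_self zero_le (one_le_pow₀ hD)).trans hγ,
    fun {E Ω B ν} hE hΩ hν hfin hB hBΩ => ?_⟩
  refine measure_mono_null (inter_subset_inter_left B lowDensitySet_subset_iUnion) ?_
  rw [iUnion_inter, measure_iUnion_null_iff]
  intro m
  refine measure_mono_null subset_closure (hzero (R := 1 / ((m : ℝ) + 1) / 2) hE hΩ hν hfin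
    (hB.subset inter_subset_right).isCompact_closure ?_ (by positivity) ?_)
  · exact (closure_mono inter_subset_right).trans hBΩ
  · exact (closure_mono inter_subset_left).trans hμ.closure_lowDensitySetBelow_subset

end LowDensitySet

/-! ### Quasi-openness of the measure-theoretic exterior -/

section Boxing

variable {μ ν : Measure X} {E Ω B U : Set X} {γ β κ D : ℝ≥0} {y : X} {r ρ CP lam : ℝ}

lemma IsPerimeterMeasure.measure_ball_inter_le_mul (hν : IsPerimeterMeasure μ E Ω ν)
    (hμ : Doubling μ D) (hP : Poincare μ CP lam) (hE : MeasurableSet E) (hγ : γ ≤ 2⁻¹) (hr : 0 < r)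
    (hΩ : closedBall y (lam * r) ⊆ Ω) (hlow : μ (ball y r ∩ E) ≤ γ * μ (ball y r)) :
    μ (ball y r ∩ E) ≤
      ENNReal.ofReal CP * (ENNReal.ofReal r * ν (closedBall y (lam * r))) := by
  have hγ' : (γ : ℝ≥0∞) ≤ 2⁻¹ := by
    rw [← ENNReal.coe_ofNat, ← ENNReal.coe_inv two_ne_zero]
    exact_mod_cast hγ
  rw [← mul_assoc, ← ENNReal.ofReal_mul (zero_le_one.trans hP.1)]
  exact hν.measure_ball_inter_le hμ hP hE hr hΩ
    (measure_inter_le_measure_sdiff hE (hμ.measure_ball_lt_top y r).ne (hlow.trans (by gcongr)))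

omit [BorelSpace X] in
lemma Doubling.measure_ball_inter_le_of_le_two_mul (hμ : Doubling μ D) (hβ : β * D ≤ γ) (hr : 0 < r)
    (hrρ : r ≤ ρ) (hρr : ρ ≤ 2 * r) (hβρ : μ (ball y ρ ∩ E) ≤ β * μ (ball y ρ)) :
    μ (ball y r ∩ E) ≤ γ * μ (ball y r) :=
  calc μ (ball y r ∩ E) ≤ μ (ball y ρ ∩ E) := by gcongr
    _ ≤ β * (D ^ 1 * μ (ball y r)) := hβρ.trans (by
        gcongr
        exact hμ.measure_ball_le hr (by simpa using hρr))
    _ = ((β * D : ℝ≥0) : ℝ≥0∞) * μ (ball y r) := by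
        rw [pow_one, ENNReal.coe_mul, mul_assoc]
    _ ≤ γ * μ (ball y r) := by gcongr

/-- The boxing argument: halving the radius multiplies the density by at most `D`, and the
isoperimetric inequality brings it back from `γ` to `β = γ / D`. -/
lemma IsPerimeterMeasure.measure_ball_inter_le_of_boxing (hν : IsPerimeterMeasure μ E Ω ν)
    (hμ : Doubling μ D) (hP : Poincare μ CP lam) (hE : MeasurableSet E) (hγ : γ ≤ 2⁻¹)
    (hβ : β * D ≤ γ) (hκ : ENNReal.ofReal CP * κ ≤ β) (hΩ : closedBall y (lam * ρ) ⊆ Ω)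
    (hρ : μ (ball y ρ ∩ E) ≤ β * μ (ball y ρ))
    (hmax : ∀ r, 0 < r → r ≤ ρ →
      ENNReal.ofReal r * ν (closedBall y (lam * r)) ≤ κ * μ (ball y r))
    (j : ℕ) (hr : 0 < r) (hrρ : r ≤ ρ) (hj : ρ ≤ 2 ^ j * r) :
    μ (ball y r ∩ E) ≤ γ * μ (ball y r) := by
  have hlam : 0 ≤ lam := zero_le_one.trans hP.2.1
  have himprove {s : ℝ} (hs : 0 < s) (hsρ : s ≤ ρ) (hlow : μ (ball y s ∩ E) ≤ γ * μ (ball y s)) :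
      μ (ball y s ∩ E) ≤ β * μ (ball y s) :=
    calc μ (ball y s ∩ E)
      _ ≤ ENNReal.ofReal CP * (ENNReal.ofReal s * ν (closedBall y (lam * s))) :=
          hν.measure_ball_inter_le_mul hμ hP hE hγ hs
            ((closedBall_subset_closedBall (by gcongr)).trans hΩ) hlow
      _ ≤ ENNReal.ofReal CP * (κ * μ (ball y s)) := mul_le_mul_right (hmax s hs hsρ) _
      _ ≤ β * μ (ball y s) := by
          rw [← mul_assoc]
          gcongr
  induction j generalizing r with
  | zero => exact hμ.measure_ball_inter_le_of_le_two_mul hβ hr hrρ (by linarith) hρ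
  | succ j ih =>
    rcases le_total (2 * r) ρ with h2r | h2r
    · have h2r0 : 0 < 2 * r := by positivity
      exact hμ.measure_ball_inter_le_of_le_two_mul hβ hr (by linarith) le_rfl
        (himprove h2r0 h2r (ih h2r0 h2r (by rw [pow_succ] at hj; linarith)))
    · exact hμ.measure_ball_inter_le_of_le_two_mul hβ hr hrρ h2r hρ

lemma IsPerimeterMeasure.mem_lowDensitySet_of_boxing (hν : IsPerimeterMeasure μ E Ω ν)
    (hμ : Doubling μ D) (hP : Poincare μ CP lam) (hE : MeasurableSet E) (hγ : γ ≤ 2⁻¹)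
    (hβ : β * D ≤ γ) (hκ : ENNReal.ofReal CP * κ ≤ β) (hρ : 0 < ρ)
    (hΩ : closedBall y (lam * ρ) ⊆ Ω) (hlow : μ (ball y ρ ∩ E) ≤ β * μ (ball y ρ))
    (hmax : ∀ r, 0 < r → r ≤ ρ →
      ENNReal.ofReal r * ν (closedBall y (lam * r)) ≤ κ * μ (ball y r)) :
    y ∈ lowDensitySet μ E γ := by
  filter_upwards [Ioo_mem_nhdsGT hρ] with r hr
  obtain ⟨j, hj⟩ := pow_unbounded_of_one_lt (ρ / r) one_lt_two
  rw [div_lt_iff₀ hr.1] at hj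
  exact hν.measure_ball_inter_le_of_boxing hμ hP hE hγ hβ hκ hΩ hlow hmax j hr.1 hr.2.le hj.le

lemma Doubling.exists_capaLE_forall_notMem_le [SecondCountableTopology X] (hμ : Doubling μ D)
    (hlam : 1 ≤ lam) (hκ : 0 < κ) :
    ∃ C : ℝ≥0, ∀ {ν : Measure X} {W : Set X}, MeasurableSet W →
      ∃ G, IsOpen G ∧ CapaLE μ G (C * ν W) ∧ ∀ y ∉ G, ∀ r : ℝ, 0 < r → r ≤ 1 →
        ENNReal.ofReal r * ν (closedBall y (lam * r) ∩ W) ≤ κ * μ (ball y r) := by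
  obtain ⟨C, hC⟩ := hμ.exists_capaLE_of_forall_exists_ball hlam
  refine ⟨C * κ⁻¹, fun {ν W} hW => ?_⟩
  set Y := {y | ∃ r : ℝ, 0 < r ∧ r ≤ 1 ∧
    κ * μ (ball y r) < ENNReal.ofReal r * ν (closedBall y (lam * r) ∩ W)}
  have hY (y : X) (hy : y ∈ Y) : ∃ r : ℝ, 0 < r ∧ r ≤ 1 ∧
      μ (ball y r) ≤ ENNReal.ofReal r * ((κ⁻¹ : ℝ≥0) * ν (closedBall y (lam * r) ∩ W)) := by
    obtain ⟨r, hr, hr1, hlt⟩ := hy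
    refine ⟨r, hr, hr1, ?_⟩
    rw [mul_left_comm, ENNReal.coe_inv hκ.ne', mul_comm, ← div_eq_mul_inv,
      ENNReal.le_div_iff_mul_le (by simp [hκ.ne']) (by simp), mul_comm]
    exact hlt.le
  obtain ⟨G, hG, hYG, hcap⟩ := hC ν Y W (κ⁻¹ : ℝ≥0) hW hY
  refine ⟨G, hG, by simpa using hcap, fun y hy r hr hr1 => ?_⟩
  by_contra! hlt
  exact hy (hYG ⟨r, hr, hr1, hlt⟩)

lemma Doubling.exists_capaLE_forall_notMem_mem_lowDensitySet [SecondCountableTopology X]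
    (hμ : Doubling μ D) (hP : Poincare μ CP lam) (hγ0 : 0 < γ) (hγ : γ ≤ 2⁻¹) :
    ∃ β C : ℝ≥0, 0 < β ∧ ∀ {E Ω W : Set X} {ν : Measure X}, MeasurableSet E →
      IsPerimeterMeasure μ E Ω ν → MeasurableSet W → ∃ G, IsOpen G ∧ CapaLE μ G (C * ν W) ∧
        ∀ y ∉ G, ∀ ρ : ℝ, 0 < ρ → ρ ≤ 1 → closedBall y (lam * ρ) ⊆ Ω ∩ W →
          μ (ball y ρ ∩ E) ≤ β * μ (ball y ρ) → y ∈ lowDensitySet μ E γ := by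
  have hD : (1 : ℝ≥0) ≤ D := hμ.one_le
  have hlam : 0 ≤ lam := zero_le_one.trans hP.2.1
  have hCP : 0 < CP.toNNReal := Real.toNNReal_pos.2 (one_pos.trans_le hP.1)
  obtain ⟨C, hC⟩ := hμ.exists_capaLE_forall_notMem_le hP.2.1 (κ := γ / D / CP.toNNReal)
    (by positivity)
  refine ⟨γ / D, C, by positivity, fun {E Ω W ν} hE hν hW => ?_⟩
  obtain ⟨G, hG, hcap, hmax⟩ := hC (ν := ν) hW
  refine ⟨G, hG, hcap, fun y hy ρ hρ hρ1 hsub hlow => ?_⟩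
  refine hν.mem_lowDensitySet_of_boxing (κ := γ / D / CP.toNNReal) hμ hP hE hγ
    (div_mul_cancel₀ _ (by positivity)).le ?_ hρ (hsub.trans inter_subset_left) hlow
    fun r hr hrρ => ?_
  · rw [ENNReal.ofReal, ← ENNReal.coe_mul, mul_div_cancel₀ _ hCP.ne']
  · have hle := hmax y hy r hr (hrρ.trans hρ1)
    rwa [inter_eq_left.2] at hle
    exact ((closedBall_subset_closedBall (by gcongr)).trans hsub).trans inter_subset_right

end Boxing

section Exterior

variable {μ ν : Measure X} {E Ω B U : Set X} {γ β c D : ℝ≥0} {x y : X} {CP lam : ℝ} {ε : ℝ≥0∞}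

omit [BorelSpace X] in
lemma Doubling.mExterior_subset_lowDensitySet (hμ : Doubling μ D) (hc : 0 < c) :
    mExterior μ E ⊆ lowDensitySet μ E c := fun x hx => by
  filter_upwards [ENNReal.tendsto_nhds_zero.1 hx c (by exact_mod_cast hc), self_mem_nhdsWithin]
    with r hle hr
  rwa [ENNReal.div_le_iff (hμ.measure_ball_pos x hr).ne' (hμ.measure_ball_lt_top x r).ne] at hle

omit [BorelSpace X] in
lemma Doubling.exists_nat_frequently_of_notMem_mExterior (hμ : Doubling μ D)
    (hy : y ∉ mExterior μ E) :
    ∃ k : ℕ, ∃ᶠ r in 𝓝[>] (0 : ℝ), μ (ball y r) ≤ k * μ (ball y r ∩ E) := by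
  have hdens : ¬ ∀ ε > 0, ∀ᶠ r in 𝓝[>] (0 : ℝ), μ (ball y r ∩ E) / μ (ball y r) ≤ ε :=
    fun h => hy (ENNReal.tendsto_nhds_zero.2 h)
  push Not at hdens
  obtain ⟨c, hc, hfreq⟩ := hdens
  obtain ⟨k, hk⟩ := ENNReal.exists_inv_nat_lt hc.ne'
  refine ⟨k, (hfreq.and_eventually self_mem_nhdsWithin).mono fun r ⟨hlt, hr⟩ => ?_⟩
  rw [ENNReal.lt_div_iff_mul_lt (Or.inl (hμ.measure_ball_pos y hr).ne')
    (Or.inl (hμ.measure_ball_lt_top y r).ne)] at hlt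
  have hk0 : (k : ℝ≥0∞) ≠ 0 := fun h0 => by simp [h0] at hk
  calc μ (ball y r) = k * ((k : ℝ≥0∞)⁻¹ * μ (ball y r)) := by
        rw [← mul_assoc, ENNReal.mul_inv_cancel hk0 (ENNReal.natCast_ne_top k), one_mul]
    _ ≤ k * (c * μ (ball y r)) := by gcongr
    _ ≤ k * μ (ball y r ∩ E) := by gcongr

omit [MeasurableSpace X] [BorelSpace X] in
lemma eventually_closedBall_mul_subset (hlam : 0 < lam) (hU : U ∈ 𝓝 y) :
    ∀ᶠ r in 𝓝[>] (0 : ℝ), closedBall y (lam * r) ⊆ U := by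
  obtain ⟨s, hs, hsU⟩ := Metric.nhds_basis_closedBall.mem_iff.1 hU
  filter_upwards [Ioo_mem_nhdsGT (div_pos hs hlam)] with r hr
  exact (closedBall_subset_closedBall ((lt_div_iff₀' hlam).1 hr.2).le).trans hsU

lemma IsPerimeterMeasure.exists_measure_ball_le_of_frequently (hν : IsPerimeterMeasure μ E Ω ν)
    (hμ : Doubling μ D) (hP : Poincare μ CP lam) (hE : MeasurableSet E) (hγ : γ ≤ 2⁻¹)
    (hΩ : Ω ∈ 𝓝 y) (hU : U ∈ 𝓝 y) (hlow : y ∈ lowDensitySet μ E γ) {k : ℕ}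
    (hfreq : ∃ᶠ r in 𝓝[>] (0 : ℝ), μ (ball y r) ≤ k * μ (ball y r ∩ E)) :
    ∃ r : ℝ, 0 < r ∧ r ≤ 1 ∧
      μ (ball y r) ≤
        ENNReal.ofReal r * (k * ENNReal.ofReal CP * ν (closedBall y (lam * r) ∩ U)) := by
  have hlam : 0 < lam := one_pos.trans_le hP.2.1
  have hlow' : ∀ᶠ r in 𝓝[>] (0 : ℝ), μ (ball y r ∩ E) ≤ γ * μ (ball y r) := hlow
  have hsmall : ∀ᶠ r in 𝓝[>] (0 : ℝ), r ∈ Ioo 0 1 := Ioo_mem_nhdsGT one_pos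
  obtain ⟨r, hr, hlowr, hrΩ, hrU, hr1⟩ := (hfreq.and_eventually
    (hlow'.and ((eventually_closedBall_mul_subset hlam hΩ).and
      ((eventually_closedBall_mul_subset hlam hU).and hsmall)))).exists
  refine ⟨r, hr1.1, hr1.2.le, ?_⟩
  rw [inter_eq_left.2 hrU]
  calc μ (ball y r) ≤ k * μ (ball y r ∩ E) := hr
    _ ≤ k * (ENNReal.ofReal CP * (ENNReal.ofReal r * ν (closedBall y (lam * r)))) := by
        gcongr
        exact hν.measure_ball_inter_le_mul hμ hP hE hγ hr1.1 hrΩ hlowr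
    _ = _ := by ring

omit [BorelSpace X] in
lemma exists_isOpen_superset_mul_measure_le {A : Set X} [ν.OuterRegular] (hA : ν A = 0)
    {a : ℝ≥0∞} (ha : a ≠ ∞) (hε : 0 < ε) : ∃ U ⊇ A, IsOpen U ∧ a * ν U ≤ ε := by
  obtain ⟨U, hAU, hU, hlt⟩ := A.exists_isOpen_lt_of_lt (ε / a) (hA ▸ ENNReal.div_pos hε.ne' ha)
  exact ⟨U, hAU, hU, (mul_le_mul_right hlt.le a).trans ENNReal.mul_div_le⟩

lemma IsPerimeterMeasure.exists_capaLE_lowDensitySet_sdiff_mExterior_subset [ProperSpace X]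
    [IsFiniteMeasure ν] (hν : IsPerimeterMeasure μ E Ω ν) (hμ : Doubling μ D)
    (hP : Poincare μ CP lam) (hE : MeasurableSet E) (hγ : γ ≤ 2⁻¹) (hΩ : IsOpen Ω) (hB : B ⊆ Ω)
    (hnull : ν (lowDensitySet μ E γ ∩ B) = 0) (hε : 0 < ε) :
    ∃ G, IsOpen G ∧ CapaLE μ G ε ∧ (lowDensitySet μ E γ ∩ B) \ mExterior μ E ⊆ G := by
  obtain ⟨C, hC⟩ := hμ.exists_capaLE_of_forall_exists_ball hP.2.1
  obtain ⟨e, he, hsum⟩ := ENNReal.exists_pos_sum_of_countable' hε.ne' ℕ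
  have hlevel (k : ℕ) : ∃ G, IsOpen G ∧ CapaLE μ G (e k) ∧ ∀ y ∈ lowDensitySet μ E γ ∩ B,
      (∃ᶠ r in 𝓝[>] (0 : ℝ), μ (ball y r) ≤ k * μ (ball y r ∩ E)) → y ∈ G := by
    have hfin : C * (k * ENNReal.ofReal CP) ≠ ∞ := by finiteness
    obtain ⟨U, hAU, hU, hle⟩ := exists_isOpen_superset_mul_measure_le hnull hfin (he k)
    obtain ⟨G, hG, hYG, hcap⟩ := hC ν {y ∈ lowDensitySet μ E γ ∩ B |
      ∃ᶠ r in 𝓝[>] (0 : ℝ), μ (ball y r) ≤ k * μ (ball y r ∩ E)} U _ hU.measurableSet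
      fun y hy => hν.exists_measure_ball_le_of_frequently hμ hP hE hγ
        (hΩ.mem_nhds (hB hy.1.2)) (hU.mem_nhds (hAU hy.1)) hy.1.1 hy.2
    exact ⟨G, hG, hcap.mono hle, fun y hy hfreq => hYG ⟨hy, hfreq⟩⟩
  choose G hG hcap hsub using hlevel
  refine ⟨⋃ k, G k, isOpen_iUnion hG, (CapaLE.iUnion hcap).mono hsum.le, fun y ⟨hy, hyE⟩ => ?_⟩
  obtain ⟨k, hk⟩ := hμ.exists_nat_frequently_of_notMem_mExterior hyE
  exact mem_iUnion.2 ⟨k, hsub k y hy hk⟩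

omit [BorelSpace X] in
lemma Doubling.exists_eventually_measure_ball_inter_le (hμ : Doubling μ D) (hlam : 1 ≤ lam)
    (hβ : 0 < β) (hU : U ∈ 𝓝 x) (hx : x ∈ mExterior μ E) :
    ∃ ρ : ℝ, 0 < ρ ∧ ρ ≤ 1 ∧ ∀ᶠ y in 𝓝 x,
      closedBall y (lam * ρ) ⊆ U ∧ μ (ball y ρ ∩ E) ≤ β * μ (ball y ρ) := by
  have hD : (1 : ℝ≥0) ≤ D := hμ.one_le
  have hlow : ∀ᶠ t in 𝓝[>] (0 : ℝ), μ (ball x t ∩ E) ≤ (β / D ^ 2 : ℝ≥0) * μ (ball x t) :=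
    hμ.mExterior_subset_lowDensitySet (by positivity) hx
  have hsmall : ∀ᶠ t in 𝓝[>] (0 : ℝ), t ∈ Ioo 0 1 := Ioo_mem_nhdsGT one_pos
  obtain ⟨t, ht, htU, ht0, ht1⟩ := (hlow.and
    ((eventually_closedBall_mul_subset (one_pos.trans_le hlam) hU).and hsmall)).exists
  refine ⟨t / 2, by positivity, by linarith, ?_⟩
  filter_upwards [ball_mem_nhds x (half_pos ht0)] with y hy
  rw [mem_ball] at hy
  refine ⟨(closedBall_subset_closedBall' (by nlinarith)).trans htU, ?_⟩
  calc μ (ball y (t / 2) ∩ E) ≤ μ (ball x t ∩ E) := by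
        gcongr
        exact ball_subset_ball' (by linarith)
    _ ≤ (β / D ^ 2 : ℝ≥0) * (D ^ 2 * μ (ball y (t / 2))) := ht.trans (by
        gcongr
        exact hμ.measure_ball_le (half_pos ht0) (by rw [dist_comm]; linarith))
    _ = β * μ (ball y (t / 2)) := by
        rw [← mul_assoc, ← ENNReal.coe_pow, ← ENNReal.coe_mul, div_mul_cancel₀ _ (by positivity)]

lemma Doubling.exists_capaLE_forall_notMem_mem_mExterior [ProperSpace X] (hμ : Doubling μ D)
    (hP : Poincare μ CP lam) :
    ∃ γ β C : ℝ≥0, 0 < γ ∧ 0 < β ∧ ∀ {E Ω B : Set X} {ν : Measure X} [IsFiniteMeasure ν],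
      MeasurableSet E → IsOpen Ω → IsPerimeterMeasure μ E Ω ν → relaxedPerimeter μ E Ω ≠ ∞ →
      Bornology.IsBounded B → closure B ⊆ Ω → ν (lowDensitySet μ E γ ∩ B) = 0 ∧
        ∀ {W : Set X} {ε : ℝ≥0∞}, MeasurableSet W → 0 < ε →
          ∃ G, IsOpen G ∧ CapaLE μ G (C * ν W + ε) ∧ ∀ y ∈ B \ G, ∀ ρ : ℝ, 0 < ρ → ρ ≤ 1 →
            closedBall y (lam * ρ) ⊆ Ω ∩ W → μ (ball y ρ ∩ E) ≤ β * μ (ball y ρ) →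
              y ∈ mExterior μ E := by
  obtain ⟨γ, hγ0, hγ, hnull⟩ := hμ.exists_density_measure_lowDensitySet_inter_eq_zero hP
  obtain ⟨β, C, hβ, hbox⟩ := hμ.exists_capaLE_forall_notMem_mem_lowDensitySet hP hγ0 hγ
  refine ⟨γ, β, C, hγ0, hβ, fun {E Ω B ν} _ hE hΩ hν hfin hBb hB => ?_⟩
  have hzero := hnull hE hΩ hν hfin hBb hB
  refine ⟨hzero, fun {W ε} hW hε => ?_⟩
  obtain ⟨G, hG, hcap, hlow⟩ := hbox hE hν hW
  obtain ⟨G', hG', hcap', hsub⟩ := hν.exists_capaLE_lowDensitySet_sdiff_mExterior_subset hμ hP hE hγ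
    hΩ (subset_closure.trans hB) hzero hε
  refine ⟨G ∪ G', hG.union hG', hcap.union hcap', fun y ⟨hyB, hyG⟩ ρ hρ hρ1 hball hdens => ?_⟩
  rw [mem_union, not_or] at hyG
  by_contra hyE
  exact hyG.2 (hsub ⟨⟨hlow y hyG.1 ρ hρ hρ1 hball hdens, hyB⟩, hyE⟩)

lemma Doubling.exists_capaLE_forall_eventually_mem_mExterior [ProperSpace X] (hμ : Doubling μ D)
    (hP : Poincare μ CP lam) (hE : MeasurableSet E) (hΩ : IsOpen Ω) (hΩb : Bornology.IsBounded Ω)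
    (hfin : relaxedPerimeter μ E Ω ≠ ∞) (hBo : IsOpen B) (hB : closure B ⊆ Ω) (hε : 0 < ε) :
    ∃ G, IsOpen G ∧ CapaLE μ G ε ∧
      ∀ x ∈ B ∩ mExterior μ E, ∀ᶠ y in 𝓝 x, y ∉ G → y ∈ mExterior μ E := by
  obtain ⟨γ, β, C, hγ, hβ, hcore⟩ := hμ.exists_capaLE_forall_notMem_mem_mExterior hP
  obtain ⟨ν, hν⟩ := exists_isPerimeterMeasure hΩb hΩ.measurableSet hfin
  have : IsFiniteMeasure ν := ⟨hν.measure_univ_le.trans_lt hfin.lt_top⟩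
  have hBΩ : B ⊆ Ω := subset_closure.trans hB
  obtain ⟨hzero, hG⟩ := hcore hE hΩ hν hfin (hΩb.subset hBΩ) hB
  obtain ⟨U, hlowU, hU, hUle⟩ := exists_isOpen_superset_mul_measure_le hzero
    (ENNReal.coe_ne_top (r := C)) (ENNReal.half_pos hε.ne')
  obtain ⟨G, hGo, hcap, hmem⟩ := hG hU.measurableSet (ENNReal.half_pos hε.ne')
  refine ⟨G, hGo, hcap.mono ((add_le_add hUle le_rfl).trans (ENNReal.add_halves ε).le),
    fun x ⟨hxB, hxE⟩ => ?_⟩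
  have hxU : x ∈ U := hlowU ⟨hμ.mExterior_subset_lowDensitySet hγ hxE, hxB⟩
  obtain ⟨ρ, hρ, hρ1, hev⟩ := hμ.exists_eventually_measure_ball_inter_le hP.2.1 hβ
    (inter_mem (hΩ.mem_nhds (hBΩ hxB)) (hU.mem_nhds hxU)) hxE
  filter_upwards [hev, hBo.mem_nhds hxB] with y ⟨hyU, hlow⟩ hyB hyG
  exact hmem y ⟨hyB, hyG⟩ ρ hρ hρ1 hyU hlow

lemma Doubling.exists_capaLE_sdiff_subset_mExterior [ProperSpace X] (hμ : Doubling μ D)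
    (hP : Poincare μ CP lam) :
    ∃ β C : ℝ≥0, 0 < β ∧ ∀ {E Ω B : Set X} {ε : ℝ≥0∞}, MeasurableSet E → IsOpen Ω →
      Bornology.IsBounded Ω → relaxedPerimeter μ E Ω ≠ ∞ →
      (∀ y ∈ B, closedBall y 1 ⊆ Ω ∧ μ (ball y lam⁻¹ ∩ E) ≤ β * μ (ball y lam⁻¹)) → 0 < ε →
        ∃ G, IsOpen G ∧ CapaLE μ G (C * relaxedPerimeter μ E Ω + ε) ∧ B \ G ⊆ mExterior μ E := by
  obtain ⟨γ, β, C, -, hβ, hcore⟩ := hμ.exists_capaLE_forall_notMem_mem_mExterior hP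
  refine ⟨β, C, hβ, fun {E Ω B ε} hE hΩ hΩb hfin hlow hε => ?_⟩
  have hB : closure B ⊆ Ω := fun z hz => by
    obtain ⟨y, hy, hzy⟩ := Metric.mem_closure_iff.1 hz 1 one_pos
    exact (hlow y hy).1 hzy.le
  obtain ⟨ν, hν⟩ := exists_isPerimeterMeasure hΩb hΩ.measurableSet hfin
  have : IsFiniteMeasure ν := ⟨hν.measure_univ_le.trans_lt hfin.lt_top⟩
  obtain ⟨-, hG⟩ := hcore hE hΩ hν hfin (hΩb.subset (subset_closure.trans hB)) hB
  obtain ⟨G, hGo, hcap, hmem⟩ := hG MeasurableSet.univ hε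
  refine ⟨G, hGo, hcap.mono ?_, fun y hy => ?_⟩
  · gcongr
    exact hν.measure_univ_le
  · have hlam : 0 < lam := one_pos.trans_le hP.2.1
    refine hmem y hy lam⁻¹ (by positivity) (inv_le_one_of_one_le₀ hP.2.1) ?_ (hlow y hy.1).2
    rw [inter_univ, mul_inv_cancel₀ hlam.ne']
    exact (hlow y hy.1).1

end Exterior

/-! ### Sublevel sets of functions of bounded variation -/

/-- The decreasing ramp from `1` on `(-∞, τ - h]` to `0` on `[τ, ∞)`. -/
def ramp (h τ s : ℝ) : ℝ := clamp ((τ - s) / h)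

/-- A gradient for `ramp h τ ∘ v` built from an upper gradient `g` of `v`. The band on which it
lives is an open neighbourhood of the one where the ramp is not constant. -/
def rampGrad (v : X → ℝ) (g : X → ℝ≥0∞) (h τ : ℝ) : X → ℝ≥0∞ :=
  (v ⁻¹' Ioo (τ - 2 * h) (τ + h)).indicator fun x => ENNReal.ofReal h⁻¹ * g x

section Ramp

variable {μ : Measure X} {Ω : Set X} {u v : X → ℝ} {g : X → ℝ≥0∞} {h τ s : ℝ}

lemma ramp_of_le (hh : 0 < h) (hs : s + h ≤ τ) : ramp h τ s = 1 :=
  clamp_of_one_le (by rw [le_div_iff₀ hh]; linarith)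

lemma ramp_of_ge (hh : 0 < h) (hs : τ ≤ s) : ramp h τ s = 0 :=
  clamp_of_nonpos (div_nonpos_of_nonpos_of_nonneg (by linarith) hh.le)

lemma measurable_ramp : Measurable (ramp h τ) :=
  lipschitzWith_clamp.continuous.measurable.comp (by fun_prop)

lemma abs_ramp_sub_ramp_le (hh : 0 < h) (a b : ℝ) : |ramp h τ a - ramp h τ b| ≤ h⁻¹ * |a - b| := by
  have hclamp := lipschitzWith_clamp.dist_le_mul ((τ - a) / h) ((τ - b) / h)
  rwa [NNReal.coe_one, one_mul, Real.dist_eq, Real.dist_eq, ← sub_div, abs_div, abs_of_pos hh,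
    sub_sub_sub_cancel_left, abs_sub_comm b, div_eq_inv_mul |a - b|] at hclamp

omit [MeasurableSpace X] [BorelSpace X] in
lemma UGIneq.ramp_comp {γ : Curve X} (hv : UGIneq v g γ) (hh : 0 < h) :
    UGIneq (fun x => ramp h τ (v x)) (fun x => ENNReal.ofReal h⁻¹ * g x) γ :=
  calc ENNReal.ofReal |ramp h τ (v (γ.toFun 0)) - ramp h τ (v (γ.toFun γ.len))|
      ≤ ENNReal.ofReal (h⁻¹ * |v (γ.toFun 0) - v (γ.toFun γ.len)|) :=
        ENNReal.ofReal_le_ofReal (abs_ramp_sub_ramp_le hh _ _)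
    _ = ENNReal.ofReal h⁻¹ * ENNReal.ofReal |v (γ.toFun 0) - v (γ.toFun γ.len)| :=
        ENNReal.ofReal_mul (by positivity)
    _ ≤ ENNReal.ofReal h⁻¹ * γ.integral g := mul_le_mul_right hv _
    _ = γ.integral fun x => ENNReal.ofReal h⁻¹ * g x :=
        (lintegral_const_mul' _ _ ENNReal.ofReal_ne_top).symm

omit [MeasurableSpace X] [BorelSpace X] in
lemma UGIneqOn.ramp_comp (hug : UGIneqOn Ω v g) (hΩ : IsOpen Ω) (hc : ContinuousOn v Ω)
    (hh : 0 < h) : UGIneqOn Ω (fun x => ramp h τ (v x)) (rampGrad v g h τ) := by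
  refine ugIneqOn_of_locally fun x hx => ?_
  have hopen {O : Set ℝ} (hO : IsOpen O) : IsOpen (Ω ∩ v ⁻¹' O) := hc.isOpen_inter_preimage hΩ hO
  rcases lt_or_ge (v x) (τ - h) with hlow | hlow
  · refine ⟨_, hopen isOpen_Iio, ⟨hx, hlow⟩, 1, one_pos, fun γ hγ _ =>
      ugIneq_of_eqOn_const hγ fun z hz => ramp_of_le hh ?_⟩
    linarith [show v z < τ - h from hz.1.2]
  rcases lt_or_ge τ (v x) with hhigh | hhigh
  · exact ⟨_, hopen isOpen_Ioi, ⟨hx, hhigh⟩, 1, one_pos, fun γ hγ _ =>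
      ugIneq_of_eqOn_const hγ fun z hz => ramp_of_ge hh (le_of_lt hz.1.2)⟩
  · have hband : v x ∈ Ioo (τ - 2 * h) (τ + h) := ⟨by linarith, by linarith⟩
    refine ⟨_, hopen isOpen_Ioo, ⟨hx, hband⟩, 1, one_pos, fun γ hγ _ => ?_⟩
    have hγΩ : γ.In Ω := hγ.mono inter_subset_right
    refine ((hug γ hγΩ).ramp_comp hh).congr_mono hγ (fun _ _ => rfl) fun z hz => ?_
    rw [rampGrad, indicator_of_mem hz.1.2]

omit [MetricSpace X] [BorelSpace X] in
lemma measurable_uncurry_rampGrad (hv : Measurable v) (hg : Measurable g) :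
    Measurable (Function.uncurry (rampGrad v g h)) := by
  have hv' : Measurable fun p : ℝ × X => v p.2 := hv.comp measurable_snd
  have hband : MeasurableSet {p : ℝ × X | p.1 - 2 * h < v p.2 ∧ v p.2 < p.1 + h} :=
    (measurableSet_lt (by fun_prop) hv').inter (measurableSet_lt hv' (by fun_prop))
  exact ((hg.comp measurable_snd).const_mul (ENNReal.ofReal h⁻¹)).indicator hband

omit [BorelSpace X] in
lemma isAdmissiblePair_ramp (hΩ : IsOpen Ω) (hv : Measurable v) (hc : ContinuousOn v Ω)
    (hg : Measurable g) (hug : UGIneqOn Ω v g) (hh : 0 < h) :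
    IsAdmissiblePair Ω (fun x => ramp h τ (v x)) (rampGrad v g h τ) where
  measurable := measurable_ramp.comp hv
  mem_Icc _ := clamp_mem_Icc _
  measurable_grad := (measurable_uncurry_rampGrad hv hg).of_uncurry_left
  ugIneqOn := hug.ramp_comp hΩ hc hh

omit [MetricSpace X] [MeasurableSpace X] [BorelSpace X] in
lemma lintegral_rampGrad (hh : 0 < h) (x : X) : ∫⁻ τ, rampGrad v g h τ x = 3 * g x := by
  have hband (τ : ℝ) : rampGrad v g h τ x = (Ioo (v x - h) (v x + 2 * h)).indicator
      (fun _ => ENNReal.ofReal h⁻¹ * g x) τ := by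
    have hiff : v x ∈ Ioo (τ - 2 * h) (τ + h) ↔ τ ∈ Ioo (v x - h) (v x + 2 * h) := by
      rw [mem_Ioo, mem_Ioo, sub_lt_iff_lt_add, sub_lt_iff_lt_add, and_comm]
    simp only [rampGrad, indicator, mem_preimage, hiff]
  have hlen : h⁻¹ * (v x + 2 * h - (v x - h)) = 3 := by field_simp; ring
  simp_rw [hband]
  rw [lintegral_indicator measurableSet_Ioo, setLIntegral_const, Real.volume_Ioo, mul_right_comm,
    ← ENNReal.ofReal_mul (by positivity), hlen, ENNReal.ofReal_ofNat]

omit [MetricSpace X] [BorelSpace X] in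
lemma lintegral_lintegral_rampGrad [SFinite μ] (hv : Measurable v) (hg : Measurable g)
    (hh : 0 < h) : ∫⁻ τ, ∫⁻ x, rampGrad v g h τ x ∂μ = 3 * ∫⁻ x, g x ∂μ := by
  rw [lintegral_lintegral_swap (measurable_uncurry_rampGrad hv hg).aemeasurable]
  simp_rw [lintegral_rampGrad hh]
  exact lintegral_const_mul' _ _ (by norm_num)

end Ramp

omit [BorelSpace X] in
lemma relaxedPerimeter_le_liminf {μ : Measure X} {E Ω : Set X} {v : ℕ → X → ℝ} {g : ℕ → X → ℝ≥0∞}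
    (hadm : ∀ i, IsAdmissiblePair Ω (v i) (g i))
    (hlim : Tendsto (fun i => distL1 μ Ω (v i) (E.indicator 1)) atTop (𝓝 0)) :
    relaxedPerimeter μ E Ω ≤ liminf (fun i => ∫⁻ x in Ω, g i x ∂μ) atTop := by
  refine iSup₂_le fun δ hδ => le_liminf_of_le (by isBoundedDefault) ?_
  filter_upwards [ENNReal.tendsto_nhds_zero.1 hlim δ hδ] with i hi
  exact (hadm i).approxEnergy_le hi

section SublevelSets

variable {μ : Measure X} {Ω : Set X} {u : X → ℝ} {v : ℕ → X → ℝ} {g : ℕ → X → ℝ≥0∞} {M : ℝ≥0∞}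
  {h : ℕ → ℝ} {τ : ℝ}

omit [MetricSpace X] [MeasurableSpace X] [BorelSpace X] in
lemma eventually_ramp_eq_indicator (hh : ∀ i, 0 < h i) (hlim : Tendsto h atTop (𝓝 0)) {x : X}
    (hx : u x ≠ τ) (hv : Tendsto (fun i => v i x) atTop (𝓝 (u x))) :
    ∀ᶠ i in atTop, ramp (h i) τ (v i x) = {y | u y < τ}.indicator (1 : X → ℝ) x := by
  rcases lt_or_gt_of_ne hx with hlt | hgt
  · have hadd : Tendsto (fun i => v i x + h i) atTop (𝓝 (u x)) := by simpa using hv.add hlim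
    filter_upwards [hadd.eventually_le_const hlt] with i hi
    rw [indicator_of_mem (s := {y | u y < τ}) hlt, Pi.one_apply, ramp_of_le (hh i) hi]
  · filter_upwards [hv.eventually_const_le hgt] with i hi
    rw [indicator_of_notMem (s := {y | u y < τ}) (not_lt_of_gt hgt), ramp_of_ge (hh i) hi]

omit [MetricSpace X] [BorelSpace X] in
lemma tendsto_distL1_ramp (hΩ : μ Ω ≠ ∞) (hu : Measurable u) (hv : ∀ i, Measurable (v i))
    (hh : ∀ i, 0 < h i) (hlim : Tendsto h atTop (𝓝 0)) (hτ : ∀ᵐ x ∂μ.restrict Ω, u x ≠ τ)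
    (hvu : ∀ᵐ x ∂μ.restrict Ω, Tendsto (fun i => v i x) atTop (𝓝 (u x))) :
    Tendsto (fun i => distL1 μ Ω (fun x => ramp (h i) τ (v i x)) ({y | u y < τ}.indicator 1))
      atTop (𝓝 0) := by
  have hχ : Measurable ({y | u y < τ}.indicator (1 : X → ℝ)) :=
    measurable_one.indicator (measurableSet_lt hu measurable_const)
  rw [← lintegral_zero (μ := μ.restrict Ω)]
  refine tendsto_lintegral_of_dominated_convergence (fun _ => 1) (fun i => ?_) (fun i => ?_)
    (by simpa using hΩ) ?_
  · exact ENNReal.measurable_ofReal.comp (((measurable_ramp.comp (hv i)).sub hχ).abs)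
  · refine Eventually.of_forall fun x => ENNReal.ofReal_le_one.2 ?_
    have hχx : {y | u y < τ}.indicator (1 : X → ℝ) x ∈ Icc (0 : ℝ) 1 :=
      ⟨indicator_nonneg (fun _ _ => zero_le_one) x, indicator_le_self' (fun _ _ => zero_le_one) x⟩
    exact (Real.dist_le_of_mem_Icc (clamp_mem_Icc _) hχx).trans (by simp)
  · filter_upwards [hτ, hvu] with x hx hxv
    refine tendsto_const_nhds.congr' ?_
    filter_upwards [eventually_ramp_eq_indicator hh hlim hx hxv] with i hi
    rw [hi, sub_self, abs_zero, ENNReal.ofReal_zero]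

/-- A sequence `v` witnessing that the total variation of `u` on `Ω` is at most `M`, with genuine
upper gradients `g` and convergence in all of `L¹(Ω)`. -/
structure IsBVApproximation (μ : Measure X) (Ω : Set X) (u : X → ℝ) (M : ℝ≥0∞) (v : ℕ → X → ℝ)
    (g : ℕ → X → ℝ≥0∞) : Prop where
  measurable : ∀ i, Measurable (v i)
  continuousOn : ∀ i, ContinuousOn (v i) Ω
  measurable_grad : ∀ i, Measurable (g i)
  ugIneqOn : ∀ i, UGIneqOn Ω (v i) (g i)
  lintegral_grad_le : ∀ i, ∫⁻ x in Ω, g i x ∂μ ≤ M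
  tendsto : Tendsto (fun i => distL1 μ Ω (v i) u) atTop (𝓝 0)

namespace IsBVApproximation

omit [BorelSpace X] in
lemma comp (hv : IsBVApproximation μ Ω u M v g) {φ : ℕ → ℕ} (hφ : StrictMono φ) :
    IsBVApproximation μ Ω u M (v ∘ φ) (g ∘ φ) where
  measurable i := hv.measurable (φ i)
  continuousOn i := hv.continuousOn (φ i)
  measurable_grad i := hv.measurable_grad (φ i)
  ugIneqOn i := hv.ugIneqOn (φ i)
  lintegral_grad_le i := hv.lintegral_grad_le (φ i)
  tendsto := hv.tendsto.comp hφ.tendsto_atTop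

omit [BorelSpace X] in
lemma neg (hv : IsBVApproximation μ Ω u M v g) :
    IsBVApproximation μ Ω (-u) M (fun i => -v i) g where
  measurable i := (hv.measurable i).neg
  continuousOn i := (hv.continuousOn i).neg
  measurable_grad := hv.measurable_grad
  ugIneqOn i γ hγ := by
    simpa only [UGIneq, Pi.neg_apply, neg_sub_neg, abs_sub_comm] using hv.ugIneqOn i γ hγ
  lintegral_grad_le := hv.lintegral_grad_le
  tendsto := by
    simpa only [distL1, Pi.neg_apply, neg_sub_neg, abs_sub_comm] using hv.tendsto

omit [BorelSpace X] in
lemma exists_subseq_tendsto_ae (hv : IsBVApproximation μ Ω u M v g) (hu : Measurable u) :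
    ∃ φ : ℕ → ℕ, StrictMono φ ∧
      ∀ᵐ x ∂μ.restrict Ω, Tendsto (fun i => v (φ i) x) atTop (𝓝 (u x)) := by
  refine (tendstoInMeasure_of_tendsto_eLpNorm one_ne_zero
    (fun i => (hv.measurable i).aestronglyMeasurable) hu.aestronglyMeasurable
    (hv.tendsto.congr fun i => ?_)).exists_seq_tendsto_ae
  simp only [eLpNorm_one_eq_lintegral_enorm, Real.enorm_eq_ofReal_abs, Pi.sub_apply, distL1]

omit [BorelSpace X] in
/-- The integral of the energies of the ramps over the level `τ` is controlled by Tonelli's theorem,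
uniformly in their steepness; Fatou's lemma passes to the limit. -/
lemma exists_relaxedPerimeter_le (hv : IsBVApproximation μ Ω u M v g) (hΩ : IsOpen Ω)
    (hμΩ : μ Ω ≠ ∞) (hu : Measurable u) :
    ∃ F : ℝ → ℝ≥0∞, Measurable F ∧ ∫⁻ τ, F τ ≤ 3 * M ∧
      ∀ᵐ τ, relaxedPerimeter μ {x | u x < τ} Ω ≤ F τ := by
  obtain ⟨φ, hφ, hae⟩ := hv.exists_subseq_tendsto_ae hu
  have hvφ := hv.comp hφ
  have : IsFiniteMeasure (μ.restrict Ω) := ⟨by simpa using hμΩ.lt_top⟩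
  set h : ℕ → ℝ := fun i => 1 / ((i : ℝ) + 1)
  have hh (i : ℕ) : 0 < h i := by positivity
  set F : ℕ → ℝ → ℝ≥0∞ := fun i τ => ∫⁻ x in Ω, rampGrad (v (φ i)) (g (φ i)) (h i) τ x ∂μ
  have hF (i : ℕ) : Measurable (F i) := (measurable_uncurry_rampGrad (hvφ.measurable i)
    (hvφ.measurable_grad i)).lintegral_prod_right
  have hFint (i : ℕ) : ∫⁻ τ, F i τ ≤ 3 * M := by
    refine (lintegral_lintegral_rampGrad (hvφ.measurable i) (hvφ.measurable_grad i)
      (hh i)).trans_le ?_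
    gcongr
    exact hvφ.lintegral_grad_le i
  refine ⟨fun τ => liminf (fun i => F i τ) atTop, .liminf hF, (lintegral_liminf_le hF).trans
    (liminf_le_of_le (by isBoundedDefault) fun b hb => ?_), ?_⟩
  · obtain ⟨i, hi⟩ := hb.exists
    exact hi.trans (hFint i)
  filter_upwards [(Measure.countable_meas_level_set_pos (μ := μ.restrict Ω) hu).ae_notMem volume]
    with τ hτ
  have hne : ∀ᵐ x ∂μ.restrict Ω, u x ≠ τ := by simpa [ae_iff] using hτ
  exact relaxedPerimeter_le_liminf
    (fun i => isAdmissiblePair_ramp hΩ (hvφ.measurable i) (hvφ.continuousOn i)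
      (hvφ.measurable_grad i) (hvφ.ugIneqOn i) (hh i))
    (tendsto_distL1_ramp hμΩ hu hvφ.measurable hh tendsto_one_div_add_atTop_nhds_zero_nat hne hae)

omit [BorelSpace X] in
lemma ae_relaxedPerimeter_ne_top (hv : IsBVApproximation μ Ω u M v g) (hM : M ≠ ∞)
    (hΩ : IsOpen Ω) (hμΩ : μ Ω ≠ ∞) (hu : Measurable u) :
    ∀ᵐ τ : ℝ, relaxedPerimeter μ {x | u x < τ} Ω ≠ ∞ := by
  obtain ⟨F, hF, hFint, hle⟩ := hv.exists_relaxedPerimeter_le hΩ hμΩ hu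
  have hne : ∫⁻ τ, F τ ≠ ∞ := ne_top_of_le_ne_top (by finiteness) hFint
  filter_upwards [hle, ae_lt_top hF hne] with τ hτ hlt using (hτ.trans_lt hlt).ne

omit [BorelSpace X] in
lemma exists_lt_relaxedPerimeter_le (hv : IsBVApproximation μ Ω u M v g) (hM : M ≠ ∞)
    (hΩ : IsOpen Ω) (hμΩ : μ Ω ≠ ∞) (hu : Measurable u) (k : ℝ) {δ : ℝ≥0∞} (hδ : 0 < δ) :
    ∃ τ < k, relaxedPerimeter μ {x | u x < τ} Ω ≤ δ := by
  obtain ⟨F, -, hFint, hle⟩ := hv.exists_relaxedPerimeter_le hΩ hμΩ hu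
  by_contra! hlarge
  have hδF : ∀ᵐ τ : ℝ, τ ∈ Iio k → δ ≤ F τ := by
    filter_upwards [hle] with τ hτ hτk using (hlarge τ hτk).le.trans hτ
  have htop : ∞ ≤ 3 * M :=
    calc ∞ = ∫⁻ _ in Iio k, δ := by
          rw [setLIntegral_const, Real.volume_Iio, ENNReal.mul_top hδ.ne']
      _ ≤ ∫⁻ τ in Iio k, F τ := setLIntegral_mono_ae' measurableSet_Iio hδF
      _ ≤ 3 * M := (setLIntegral_le_lintegral _ _).trans hFint
  exact absurd htop (not_le.2 (by finiteness))

end IsBVApproximation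

end SublevelSets

/-! ### Approximations of functions of locally bounded variation -/

section Extraction

lemma exists_measurable_ge_ae_eq {α : Type*} [MeasurableSpace α] {μ : Measure α} {g : α → ℝ≥0∞}
    (hg : AEMeasurable g μ) : ∃ g', Measurable g' ∧ g ≤ g' ∧ g' =ᵐ[μ] g := by
  classical
  set N := toMeasurable μ {x | g x ≠ hg.mk g x}
  have hN : ∀ᵐ x ∂μ, x ∉ N :=
    measure_eq_zero_iff_ae_notMem.1 ((measure_toMeasurable _).trans hg.ae_eq_mk)
  refine ⟨N.piecewise ⊤ (hg.mk g), .piecewise (measurableSet_toMeasurable _ _) measurable_const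
    hg.measurable_mk, fun x => ?_, ?_⟩
  · by_cases hx : x ∈ N
    · simp [hx]
    · have hgx : g x = hg.mk g x := by_contra fun hne => hx (subset_toMeasurable _ _ hne)
      simp [hx, hgx]
  · filter_upwards [hN, hg.ae_eq_mk] with x hx hgx
    rw [piecewise_eq_of_notMem _ _ _ hx, hgx]

variable {μ : Measure X} {Ω K : Set X} {u u' : X → ℝ} {v : X → ℝ} {g : X → ℝ≥0∞}

omit [BorelSpace X] in
lemma ZeroMod.exists_lintegral_le_one {Γ : Set (Curve X)} (hΓ : ZeroMod μ Γ) :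
    ∃ ρ : X → ℝ≥0∞, Measurable ρ ∧ ∫⁻ x, ρ x ∂μ ≤ 1 ∧ ∀ γ ∈ Γ, γ.integral ρ = ∞ := by
  obtain ⟨ρ, hρ, hfin, htop⟩ := hΓ
  set c : ℝ≥0∞ := ((∫⁻ x, ρ x ∂μ) + 1)⁻¹
  have hc0 : c ≠ 0 := ENNReal.inv_ne_zero.2 (by finiteness)
  have hc : c ≠ ∞ := ENNReal.inv_ne_top.2 (by simp)
  refine ⟨fun x => c * ρ x, hρ.const_mul c, ?_, fun γ hγ => ?_⟩
  · rw [lintegral_const_mul' _ _ hc, mul_comm, ← div_eq_mul_inv]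
    exact ENNReal.div_le_of_le_mul (by simp)
  · rw [Curve.integral, lintegral_const_mul' _ _ hc]
    exact (congrArg (c * ·) (htop γ hγ)).trans (ENNReal.mul_top hc0)

omit [BorelSpace X] in
lemma IsWeakUpperGradientOn.exists_ugIneqOn (h : IsWeakUpperGradientOn μ v g Ω) :
    ∃ g' : X → ℝ≥0∞, Measurable g' ∧ UGIneqOn Ω v g' ∧
      ∫⁻ x in Ω, g' x ∂μ ≤ (∫⁻ x in Ω, g x ∂μ) + 1 := by
  obtain ⟨g', hg', hle, hae⟩ := exists_measurable_ge_ae_eq h.1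
  obtain ⟨ρ, hρ, hρ1, htop⟩ := h.2.exists_lintegral_le_one
  refine ⟨g' + ρ, hg'.add hρ, fun γ hγ => ?_, ?_⟩
  · by_cases hug : UGIneq v g γ
    · exact hug.congr_mono hγ (fun _ _ => rfl) fun x _ => (hle x).trans le_self_add
    · rw [UGIneq, top_le_iff.1 ((htop γ ⟨hγ, hug⟩).ge.trans (hγ.integral_mono (g' := g' + ρ)
        fun x _ => le_add_self))]
      exact le_top
  · simp only [Pi.add_apply]
    rw [lintegral_add_left hg', lintegral_congr_ae (ae_restrict_of_ae hae)]
    gcongr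
    exact (setLIntegral_le_lintegral _ _).trans hρ1

omit [BorelSpace X] in
lemma L1LocConv.tendsto_distL1_of_isCompact {w : ℕ → X → ℝ} (hw : L1LocConv μ Ω w u)
    (hK : IsCompact K) (hKΩ : K ⊆ Ω) : Tendsto (fun i => distL1 μ K (w i) u) atTop (𝓝 0) := by
  suffices h : Tendsto (fun i => distL1 μ (K ∩ Ω) (w i) u) atTop (𝓝 0) by
    rwa [inter_eq_left.2 hKΩ] at h
  have hmono {f f' : ℕ → ℝ≥0∞} (hf : Tendsto f atTop (𝓝 0)) (hle : ∀ i, f' i ≤ f i) :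
      Tendsto f' atTop (𝓝 0) :=
    tendsto_of_tendsto_of_tendsto_of_le_of_le tendsto_const_nhds hf (fun _ => zero_le) hle
  refine hK.induction_on (p := fun s => Tendsto (fun i => distL1 μ (s ∩ Ω) (w i) u) atTop (𝓝 0))
    (by simp [distL1]) (fun s t hst ht => hmono ht fun i => ?_) (fun s t hs ht => ?_)
    fun x hx => ?_
  · exact distL1_mono_set (inter_subset_inter_left _ hst) _ _
  · refine hmono (by simpa using hs.add ht) fun i => ?_
    rw [union_inter_distrib_right]
    exact lintegral_union_le _ _ _
  · obtain ⟨r, hr, hlim⟩ := hw x (hKΩ hx)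
    refine ⟨ball x r, mem_nhdsWithin_of_mem_nhds (ball_mem_nhds x hr), ?_⟩
    simpa only [distL1, inter_comm (ball x r)] using hlim

omit [MeasurableSpace X] [BorelSpace X] in
lemma LocLipOn.continuousOn (hv : LocLipOn v Ω) : ContinuousOn v Ω := fun x hx => by
  obtain ⟨r, hr, K, hK⟩ := hv x hx
  exact (hK.continuousOn x ⟨hx, mem_ball_self hr⟩).mono_of_mem_nhdsWithin
    (inter_mem self_mem_nhdsWithin (mem_nhdsWithin_of_mem_nhds (ball_mem_nhds x hr)))

omit [BorelSpace X] in
lemma exists_seq_of_tvOpen_lt_top (hu : tvOpen μ Ω u < ∞) :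
    ∃ (M : ℝ≥0∞) (v : ℕ → X → ℝ) (g : ℕ → X → ℝ≥0∞), M ≠ ∞ ∧ (∀ i, ContinuousOn (v i) Ω) ∧
      (∀ i, Measurable (g i)) ∧ (∀ i, UGIneqOn Ω (v i) (g i)) ∧
      (∀ i, ∫⁻ x in Ω, g i x ∂μ ≤ M) ∧ L1LocConv μ Ω v u := by
  simp only [tvOpen, iInf_lt_iff] at hu
  obtain ⟨v, g, hlip, hmin, hconv, hlim⟩ := hu
  obtain ⟨M, hM, hMtop⟩ := exists_between hlim
  obtain ⟨φ, hφ, hφM⟩ := extraction_of_frequently_atTop (frequently_lt_of_liminf_lt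
    (by isBoundedDefault) hM)
  choose g' hg' hug hle using fun i => (hmin i).1.exists_ugIneqOn
  refine ⟨M + 1, v ∘ φ, g' ∘ φ, by finiteness, fun i => (hlip _).continuousOn, fun i => hg' _,
    fun i => hug _, fun i => (hle _).trans (by gcongr; exact (hφM i).le), fun x hx => ?_⟩
  obtain ⟨r, hr, hx⟩ := hconv x hx
  exact ⟨r, hr, hx.comp hφ.tendsto_atTop⟩

/-- The values of the approximating functions off the ball are reset to `0`, as these functions
need not be measurable there. -/
lemma MemBVLoc.exists_isBVApproximation [ProperSpace X] (hu : MemBVLoc μ u) (huu' : u =ᵐ[μ] u')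
    (x : X) (R : ℝ) : ∃ M v g, M ≠ ∞ ∧ IsBVApproximation μ (ball x R) u' M v g := by
  classical
  obtain ⟨M, v, g, hM, hc, hg, hug, hle, hconv⟩ :=
    exists_seq_of_tvOpen_lt_top (hu.2 (ball x (R + 1)) isOpen_ball isBounded_ball)
  have hsub : ball x R ⊆ ball x (R + 1) := ball_subset_ball (by linarith)
  have heq (i : ℕ) : EqOn (v i) ((ball x R).indicator (v i)) (ball x R) := fun y hy =>
    (indicator_of_mem hy _).symm
  have hlim := hconv.tendsto_distL1_of_isCompact (isCompact_closedBall x R)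
    (closedBall_subset_ball (by linarith))
  refine ⟨M, fun i => (ball x R).indicator (v i), g, hM, fun i => ?_,
    fun i => ((hc i).mono hsub).congr (heq i).symm, hg,
    fun i γ hγ => (hug i γ (hγ.mono hsub)).congr_mono hγ (heq i) fun _ _ => le_rfl,
    fun i => (lintegral_mono_set hsub).trans (hle i),
    tendsto_of_tendsto_of_tendsto_of_le_of_le tendsto_const_nhds hlim (fun _ => zero_le)
      fun i => ?_⟩
  · rw [← piecewise_eq_indicator]
    exact ContinuousOn.measurable_piecewise ((hc i).mono hsub) continuousOn_const measurableSet_ball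
  · calc distL1 μ (ball x R) ((ball x R).indicator (v i)) u'
        = distL1 μ (ball x R) (v i) u := by
          refine setLIntegral_congr_fun_ae measurableSet_ball ?_
          filter_upwards [huu'] with y hy hyb
          rw [heq i hyb, hy]
      _ ≤ distL1 μ (closedBall x R) (v i) u := distL1_mono_set ball_subset_closedBall _ _

end Extraction

/-! ### Approximate limits -/

section ApproximateLimits

variable {μ : Measure X} {D : ℝ≥0} {E F : Set X} {u u' : X → ℝ} {x : X} {t : ℝ} {a : EReal}

omit [BorelSpace X] in
lemma mExterior_anti (h : E ⊆ F) : mExterior μ F ⊆ mExterior μ E := fun _ hx =>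
  tendsto_of_tendsto_of_tendsto_of_le_of_le tendsto_const_nhds hx (fun _ => zero_le) fun _ =>
    ENNReal.div_le_div_right (measure_mono (inter_subset_inter_right _ h)) _

omit [BorelSpace X] in
lemma Doubling.disjoint_mExterior (hμ : Doubling μ D) (h : E ∪ F = univ) :
    Disjoint (mExterior μ E) (mExterior μ F) := by
  refine disjoint_left.2 fun x hE hF => ?_
  have hsum : Tendsto (fun r => μ (ball x r ∩ E) / μ (ball x r) + μ (ball x r ∩ F) / μ (ball x r))
      (𝓝[>] (0 : ℝ)) (𝓝 0) := by simpa using Tendsto.add hE hF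
  obtain ⟨r, hlt, hr⟩ := ((hsum.eventually_lt_const one_pos).and self_mem_nhdsWithin).exists
  refine hlt.not_ge ?_
  rw [← ENNReal.add_div, ← ENNReal.div_self (hμ.measure_ball_pos x hr).ne'
    (hμ.measure_ball_lt_top x r).ne]
  gcongr
  calc μ (ball x r) = μ (ball x r ∩ E ∪ ball x r ∩ F) := by
        rw [← inter_union_distrib_left, h, inter_univ]
    _ ≤ μ (ball x r ∩ E) + μ (ball x r ∩ F) := measure_union_le _ _

omit [BorelSpace X] in
lemma coe_le_lowerApprox (hx : x ∈ mExterior μ {y | u y < t}) : t ≤ lowerApprox μ u x :=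
  le_sSup ⟨t, hx, rfl⟩

omit [BorelSpace X] in
lemma lt_lowerApprox_iff :
    a < lowerApprox μ u x ↔ ∃ t : ℝ, a < t ∧ x ∈ mExterior μ {y | u y < t} := by
  simp only [lowerApprox, lt_sSup_iff, exists_mem_image]
  exact exists_congr fun t => and_comm

omit [BorelSpace X] in
lemma upperApprox_eq_neg_lowerApprox : upperApprox μ u = -lowerApprox μ (-u) := by
  ext x
  refine le_antisymm ?_ (le_sInf ?_)
  · refine EReal.le_neg_of_le_neg (sSup_le ?_)
    rintro _ ⟨t, ht, rfl⟩
    refine EReal.le_neg_of_le_neg (sInf_le ⟨-t, ?_, rfl⟩)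
    simpa only [mem_ofPred_eq, Pi.neg_apply, neg_lt] using ht
  · rintro _ ⟨t, ht, rfl⟩
    refine EReal.neg_le_of_neg_le (coe_le_lowerApprox (t := -t) ?_)
    simpa only [mExterior, mem_ofPred_eq, Pi.neg_apply, neg_lt_neg_iff] using ht

omit [BorelSpace X] in
lemma lowerApprox_congr_ae (h : u =ᵐ[μ] u') : lowerApprox μ u = lowerApprox μ u' := by
  have hmeas (x : X) (r t : ℝ) : μ (ball x r ∩ {y | u y < t}) = μ (ball x r ∩ {y | u' y < t}) :=
    measure_congr <| (ae_eq_refl _).inter <| by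
      filter_upwards [h] with y hy
      exact congrArg (· < t) hy
  ext x
  simp only [lowerApprox, hmeas]

omit [BorelSpace X] in
lemma upperApprox_congr_ae (h : u =ᵐ[μ] u') : upperApprox μ u = upperApprox μ u' := by
  rw [upperApprox_eq_neg_lowerApprox, upperApprox_eq_neg_lowerApprox, lowerApprox_congr_ae h.neg]

omit [BorelSpace X] in
lemma Doubling.lowerApprox_le_upperApprox (hμ : Doubling μ D) (u : X → ℝ) (x : X) :
    lowerApprox μ u x ≤ upperApprox μ u x := by
  refine sSup_le ?_
  rintro _ ⟨t, ht, rfl⟩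
  refine le_sInf ?_
  rintro _ ⟨s, hs, rfl⟩
  refine EReal.coe_le_coe_iff.2 (not_lt.1 fun hst => ?_)
  refine disjoint_left.1 (hμ.disjoint_mExterior (eq_univ_of_forall fun y => ?_)) ht hs
  exact (lt_or_ge (u y) t).imp id hst.trans_le

end ApproximateLimits

/-! ### Quasi-semicontinuity -/

section QuasiSemicontinuity

variable {μ : Measure X} {D : ℝ≥0} {CP lam : ℝ} {u : X → ℝ} {x : X} {M ε : ℝ≥0∞}
  {v : ℕ → X → ℝ} {g : ℕ → X → ℝ≥0∞}

omit [BorelSpace X] in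
lemma Doubling.exists_pos_forall_le_measure_ball (hμ : Doubling μ D) (x : X) (R : ℝ) {r : ℝ}
    (hr : 0 < r) : ∃ m : ℝ≥0∞, 0 < m ∧ ∀ y ∈ ball x R, m ≤ μ (ball y r) := by
  obtain ⟨k, hk⟩ := pow_unbounded_of_one_lt ((R + r) / r) one_lt_two
  refine ⟨μ (ball x r) / D ^ k, ENNReal.div_pos (hμ.measure_ball_pos x hr).ne' (by finiteness),
    fun y hy => ENNReal.div_le_of_le_mul' (hμ.measure_ball_le hr ?_)⟩
  linarith [(div_lt_iff₀ hr).1 hk, mem_ball'.1 hy]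

lemma tendsto_measure_inter_lt_atBot {α : Type*} [MeasurableSpace α] {μ : Measure α} {s : Set α}
    {f : α → ℝ} (hs : MeasurableSet s) (hfin : μ s ≠ ∞) (hf : Measurable f) :
    Tendsto (fun k : ℝ => μ (s ∩ {x | f x < k})) atBot (𝓝 0) := by
  have hempty : ⋂ k : ℝ, s ∩ {x | f x < k} = ∅ :=
    eq_empty_of_forall_notMem fun x hx => lt_irrefl (f x) (mem_iInter.1 hx (f x)).2
  rw [← measure_empty (μ := μ), ← hempty]
  exact tendsto_measure_iInter_atBot
    (fun k => (hs.inter (measurableSet_lt hf measurable_const)).nullMeasurableSet)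
    (fun k l hkl x hx => ⟨hx.1, lt_of_lt_of_le hx.2 hkl⟩)
    ⟨0, measure_ne_top_of_subset inter_subset_left hfin⟩

lemma IsBVApproximation.exists_capaLE_sdiff_subset_mExterior [ProperSpace X]
    (hv : IsBVApproximation μ (ball x 2) u M v g) (hμ : Doubling μ D) (hP : Poincare μ CP lam)
    (hM : M ≠ ∞) (hu : Measurable u) (hε : 0 < ε) :
    ∃ G, IsOpen G ∧ CapaLE μ G ε ∧ ∃ t, ball x 1 \ G ⊆ mExterior μ {y | u y < t} := by
  obtain ⟨β, C, hβ, hboxing⟩ := hμ.exists_capaLE_sdiff_subset_mExterior hP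
  have hlam : 0 < lam⁻¹ := inv_pos.2 (one_pos.trans_le hP.2.1)
  obtain ⟨m, hm, hball⟩ := hμ.exists_pos_forall_le_measure_ball x 1 hlam
  have hfin : μ (ball x 2) ≠ ∞ := (hμ.measure_ball_lt_top x 2).ne
  obtain ⟨k, hk⟩ := ((tendsto_measure_inter_lt_atBot measurableSet_ball hfin hu).eventually_lt_const
    (ENNReal.mul_pos (ENNReal.coe_ne_zero.2 hβ.ne') hm.ne')).exists
  have hδ : 0 < min 1 (ε / 2 / C) :=
    lt_min one_pos (ENNReal.div_pos (ENNReal.half_pos hε.ne').ne' ENNReal.coe_ne_top)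
  obtain ⟨t, htk, ht⟩ := hv.exists_lt_relaxedPerimeter_le hM isOpen_ball hfin hu k hδ
  have hclosedBall {y : X} (hy : y ∈ ball x 1) : closedBall y 1 ⊆ ball x 2 :=
    closedBall_subset_ball' (by linarith [mem_ball.1 hy])
  have hdensity {y : X} (hy : y ∈ ball x 1) :
      μ (ball y lam⁻¹ ∩ {z | u z < t}) ≤ β * μ (ball y lam⁻¹) :=
    calc μ (ball y lam⁻¹ ∩ {z | u z < t}) ≤ μ (ball x 2 ∩ {z | u z < k}) := by
          refine measure_mono (inter_subset_inter ?_ fun z hz => lt_trans hz htk)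
          exact (ball_subset_closedBall.trans
            (closedBall_subset_closedBall (inv_le_one_of_one_le₀ hP.2.1))).trans (hclosedBall hy)
      _ ≤ β * m := hk.le
      _ ≤ β * μ (ball y lam⁻¹) := by gcongr; exact hball y hy
  obtain ⟨G, hG, hcap, hsub⟩ := hboxing (measurableSet_lt hu measurable_const) isOpen_ball
    isBounded_ball (ht.trans_lt ((min_le_left _ _).trans_lt ENNReal.one_lt_top)).ne
    (fun y hy => ⟨hclosedBall hy, hdensity hy⟩) (ENNReal.half_pos hε.ne')
  refine ⟨G, hG, hcap.mono ?_, t, hsub⟩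
  calc C * relaxedPerimeter μ {y | u y < t} (ball x 2) + ε / 2
      ≤ C * (ε / 2 / C) + ε / 2 := by gcongr; exact ht.trans (min_le_right _ _)
    _ ≤ ε / 2 + ε / 2 := by gcongr; exact ENNReal.mul_div_le
    _ = ε := ENNReal.add_halves ε

lemma IsBVApproximation.exists_capaLE_lowerSemicontinuousOn [ProperSpace X]
    (hv : IsBVApproximation μ (ball x 2) u M v g) (hμ : Doubling μ D) (hP : Poincare μ CP lam)
    (hM : M ≠ ∞) (hu : Measurable u) (hε : 0 < ε) :
    ∃ G, IsOpen G ∧ CapaLE μ G ε ∧ LowerSemicontinuousOn (lowerApprox μ u) (ball x 1 \ G) := by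
  obtain ⟨Q, hQ, hQc, hQd⟩ := (Measure.dense_of_ae (hv.ae_relaxedPerimeter_ne_top hM isOpen_ball
    (hμ.measure_ball_lt_top x 2).ne hu)).exists_countable_dense_subset
  have := hQc.to_subtype
  obtain ⟨e, he, hsum⟩ := ENNReal.exists_pos_sum_of_countable' hε.ne' Q
  have hclosure : closure (ball x 1) ⊆ ball x 2 :=
    closure_ball_subset_closedBall.trans (closedBall_subset_ball one_lt_two)
  choose G hG hcap hev using fun τ : Q => hμ.exists_capaLE_forall_eventually_mem_mExterior hP
    (measurableSet_lt hu measurable_const) isOpen_ball isBounded_ball (hQ τ.2) isOpen_ball hclosure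
    (he τ)
  refine ⟨⋃ τ, G τ, isOpen_iUnion hG, (CapaLE.iUnion hcap).mono hsum.le, fun y hy a ha => ?_⟩
  obtain ⟨t, hat, hyt⟩ := lt_lowerApprox_iff.1 ha
  obtain ⟨s, has, hst⟩ := EReal.lt_iff_exists_real_btwn.1 hat
  obtain ⟨τ, hτQ, hsτ, hτt⟩ := hQd.exists_between (EReal.coe_lt_coe_iff.1 hst)
  have hyτ : y ∈ mExterior μ {z | u z < τ} := mExterior_anti (fun z hz => lt_trans hz hτt) hyt
  filter_upwards [self_mem_nhdsWithin,
    mem_nhdsWithin_of_mem_nhds (hev ⟨τ, hτQ⟩ y ⟨hy.1, hyτ⟩)] with z hz hzτ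
  calc a < s := has
    _ < τ := EReal.coe_lt_coe_iff.2 hsτ
    _ ≤ lowerApprox μ u z := coe_le_lowerApprox (hzτ fun h => hz.2 (mem_iUnion_of_mem _ h))

lemma Doubling.exists_capaLE_lowerApprox [ProperSpace X] (hμ : Doubling μ D)
    (hP : Poincare μ CP lam) (hu : Measurable u)
    (hv : ∀ x, ∃ M v g, M ≠ ∞ ∧ IsBVApproximation μ (ball x 2) u M v g) (hε : 0 < ε) :
    ∃ G, IsOpen G ∧ CapaLE μ G ε ∧ (∀ x ∈ Gᶜ, lowerApprox μ u x ≠ ⊥) ∧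
      LowerSemicontinuousOn (lowerApprox μ u) Gᶜ := by
  obtain ⟨S, hSc, hSd⟩ := TopologicalSpace.exists_countable_dense X
  have := hSc.to_subtype
  obtain ⟨e, he, hsum⟩ := ENNReal.exists_pos_sum_of_countable' (ENNReal.half_pos hε.ne').ne' S
  choose M v g hM hv using hv
  choose G hG hcapG t ht using fun s : S =>
    (hv s).exists_capaLE_sdiff_subset_mExterior hμ hP (hM s) hu (he s)
  choose H hH hcapH hlsc using fun s : S =>
    (hv s).exists_capaLE_lowerSemicontinuousOn hμ hP (hM s) hu (he s)
  have hcover (x : X) : ∃ s : S, x ∈ ball (s : X) 1 := by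
    obtain ⟨s, hs, hdist⟩ := hSd.exists_dist_lt x one_pos
    exact ⟨⟨s, hs⟩, hdist⟩
  refine ⟨(⋃ s, G s) ∪ ⋃ s, H s, (isOpen_iUnion hG).union (isOpen_iUnion hH),
    ((CapaLE.iUnion hcapG).union (CapaLE.iUnion hcapH)).mono
      ((add_le_add hsum.le hsum.le).trans (ENNReal.add_halves ε).le),
    fun x hx => ?_, fun x hx => ?_⟩
  · obtain ⟨s, hs⟩ := hcover x
    have hxt := ht s ⟨hs, fun h => hx (.inl (mem_iUnion_of_mem s h))⟩
    exact ((EReal.bot_lt_coe _).trans_le (coe_le_lowerApprox hxt)).ne'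
  · obtain ⟨s, hs⟩ := hcover x
    have hnotMem {y : X} (hy : y ∈ ((⋃ s, G s) ∪ ⋃ s, H s)ᶜ) : y ∉ H s := fun h =>
      hy (.inr (mem_iUnion_of_mem s h))
    intro a ha
    refine nhdsWithin_le_of_mem ?_ (hlsc s x ⟨hs, hnotMem hx⟩ a ha)
    filter_upwards [self_mem_nhdsWithin, mem_nhdsWithin_of_mem_nhds (isOpen_ball.mem_nhds hs)]
      with y hy hyb using ⟨hyb, hnotMem hy⟩

lemma Doubling.exists_capaLE_upperApprox [ProperSpace X] (hμ : Doubling μ D)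
    (hP : Poincare μ CP lam) (hu : Measurable u)
    (hv : ∀ x, ∃ M v g, M ≠ ∞ ∧ IsBVApproximation μ (ball x 2) u M v g) (hε : 0 < ε) :
    ∃ G, IsOpen G ∧ CapaLE μ G ε ∧ (∀ x ∈ Gᶜ, upperApprox μ u x ≠ ⊤) ∧
      UpperSemicontinuousOn (upperApprox μ u) Gᶜ := by
  have hvneg (x : X) : ∃ M v g, M ≠ ∞ ∧ IsBVApproximation μ (ball x 2) (-u) M v g :=
    let ⟨M, v, g, hM, h⟩ := hv x
    ⟨M, _, g, hM, h.neg⟩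
  obtain ⟨G, hG, hcap, hbot, hlsc⟩ := hμ.exists_capaLE_lowerApprox hP hu.neg hvneg hε
  rw [upperApprox_eq_neg_lowerApprox]
  refine ⟨G, hG, hcap, fun x hx => by simpa using hbot x hx, fun x hx a ha => ?_⟩
  filter_upwards [hlsc x hx (-a) (EReal.neg_lt_of_neg_lt ha)] with y hy
  exact EReal.neg_lt_of_neg_lt hy

end QuasiSemicontinuity

/-- Quasi-semicontinuity of `BV` functions: if `u ∈ BV_loc(X)` and
`ε > 0`, then there is an open `G` with `capa₁(G) < ε` such that `u^∧` restricted to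
`X \ G` is real-valued and lower semicontinuous and `u^∨` restricted to `X \ G` is
real-valued and upper semicontinuous. -/
theorem bv_quasi_semicontinuity
    (μ : Measure X) (hcomp : CompleteSpace X)
    (hdoub : ∃ Cd : ℝ, Doubling μ Cd) (hpoin : ∃ CP lam : ℝ, Poincare μ CP lam)
    (u : X → ℝ) (hu : MemBVLoc μ u) (ε : ℝ) (hε : 0 < ε) :
    ∃ G : Set X, IsOpen G ∧ capa1 μ G < ENNReal.ofReal ε ∧
      (∀ x ∈ Gᶜ, lowerApprox μ u x ≠ ⊥ ∧ lowerApprox μ u x ≠ ⊤) ∧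
      LowerSemicontinuousOn (lowerApprox μ u) Gᶜ ∧
      (∀ x ∈ Gᶜ, upperApprox μ u x ≠ ⊥ ∧ upperApprox μ u x ≠ ⊤) ∧
      UpperSemicontinuousOn (upperApprox μ u) Gᶜ := by
  obtain ⟨Cd, hμ⟩ := hdoub
  obtain ⟨CP, lam, hP⟩ := hpoin
  lift Cd to ℝ≥0 using zero_le_one.trans hμ.1
  have := hμ.properSpace
  have hm : AEMeasurable u μ := by simpa only [Measure.restrict_univ] using hu.1.1
  rw [lowerApprox_congr_ae hm.ae_eq_mk, upperApprox_congr_ae hm.ae_eq_mk]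
  have hv (x : X) := hu.exists_isBVApproximation hm.ae_eq_mk x 2
  have hε4 : 0 < ENNReal.ofReal (ε / 4) := ENNReal.ofReal_pos.2 (by positivity)
  obtain ⟨G, hG, hcapG, hbot, hlsc⟩ := hμ.exists_capaLE_lowerApprox hP hm.measurable_mk hv hε4
  obtain ⟨H, hH, hcapH, htop, husc⟩ := hμ.exists_capaLE_upperApprox hP hm.measurable_mk hv hε4
  have hcap : capa1 μ (G ∪ H) < ENNReal.ofReal ε := by
    refine ((hcapG.union hcapH).capa1_le (by finiteness)).trans_lt ?_
    rw [← ENNReal.ofReal_add (by positivity) (by positivity)]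
    exact (ENNReal.ofReal_lt_ofReal_iff hε).2 (by linarith)
  have hGc : (G ∪ H)ᶜ ⊆ Gᶜ := compl_subset_compl.2 subset_union_left
  have hHc : (G ∪ H)ᶜ ⊆ Hᶜ := compl_subset_compl.2 subset_union_right
  have hle := hμ.lowerApprox_le_upperApprox (hm.mk u)
  exact ⟨G ∪ H, hG.union hH, hcap,
    fun x hx => ⟨hbot x (hGc hx), ne_top_of_le_ne_top (htop x (hHc hx)) (hle x)⟩, hlsc.mono hGc,
    fun x hx => ⟨ne_bot_of_le_ne_bot (hbot x (hGc hx)) (hle x), htop x (hHc hx)⟩, husc.mono hHc⟩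

end PaperBV
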